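/- arXiv:1803.07501 — 10 statements merged into one kernel-verified Lean document; each statement's English description precedes it below -/
import Mathlib

section
/- Let k ≥ 3 and c ≥ 2 be integers, let r be an odd positive integer, and let p be a prime such that p > 2k(k−1)^{(r−1)/2} > 8k(k−1)²c². If d is an integer with 2d+1 = rp, then every finite connected vertex-transitive k-regular simple graph of diameter d has order strictly less than M(k,d) − c (i.e., its defect exceeds c). -/
/-- The Moore bound `M(k,d) = 1 + k + k(k-1) + ... + k(k-1)^(d-1)`. -/
def mooreBound (k d : ℕ) : ℕ := 1 + ∑ i ∈ Finset.range d, k * (k - 1) ^ i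

/-- A simple graph is vertex-transitive if for every pair of vertices `u, v` there is a
graph automorphism mapping `u` to `v`. -/
def IsVertexTransitive {V : Type*} (G : SimpleGraph V) : Prop :=
  ∀ u v : V, ∃ φ : G ≃g G, φ u = v

/-!
Write `k = q + 1` and `r = 2m + 1`, let `A` be the adjacency matrix, `D` the defect, and let `Eₙ` be
the Dickson polynomial with `Eₙ(x + y) = xⁿ + yⁿ` whenever `xy = q`. In characteristic `p` we have
`E_{rp} = (E_r)ᵖ`, so `tr E_{2d+1}(A) ≡ tr E_r(A) (mod p)`, and in a vertex-transitive graph each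
trace is the number of vertices times a diagonal entry.

`E_{2n+1}(A)` is a combination of the matrices `F_i` counting nonbacktracking walks of length `i`,
which are nonnegative because they come from powers of the Hashimoto matrix. The row sums of
`S_d = F_0 + ⋯ + F_d` are `M(k, d)` and its entries are at least `1`, so the rows of `S_d - 1` are
nonnegative with sum `D`. Hence a diagonal entry of `F_{d+1} S_d` lies close to `(q + 1)q^d`, while
one of `F_d S_{d-1}` is at most `D²`. The recursion
`F_{i+1} S_{j+1} = q F_i S_j + F_{i+j+1} + F_{i+j+2}`, for `i ≥ 1`, makes these diagonal entries
grow by a factor of at least `q` at each step. If `3D² < q^m`, the second bound leaves no closed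
nonbacktracking walk of positive length at most `2m + 1`, so `E_r(A)` has zero diagonal, and the
first puts the diagonal entries of `E_{2d+1}(A)` within `3qD²` of `(q + 1)q^d ≡ ±(q + 1)q^m
(mod p)`. These are nonzero modulo `p`, and so is the number of vertices, contradicting the trace
congruence.
-/

open Finset Matrix Polynomial

section Polynomials

variable {R : Type*} [CommRing R]

/-- The polynomials `Gₙ` of Moore graph theory: evaluated at the adjacency matrix of a
`(q + 1)`-regular graph, `moorePoly q n` counts the nonbacktracking walks of length at most `n`
between two vertices. -/
noncomputable def moorePoly (q : R) : ℕ → R[X]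
  | 0 => 1
  | 1 => X + 1
  | n + 2 => X * moorePoly q (n + 1) - C q * moorePoly q n

/-- The polynomials `Fₙ` of Moore graph theory: evaluated at the adjacency matrix of a
`(q + 1)`-regular graph, `nonbacktrackingPoly q n` counts the nonbacktracking walks of length
exactly `n` between two vertices. -/
noncomputable def nonbacktrackingPoly (q : R) : ℕ → R[X]
  | 0 => 1
  | n + 1 => moorePoly q (n + 1) - moorePoly q n

variable (q : R)

lemma moorePoly_add_two (n : ℕ) :
    moorePoly q (n + 2) = X * moorePoly q (n + 1) - C q * moorePoly q n := rfl

lemma moorePoly_succ (n : ℕ) :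
    moorePoly q (n + 1) = moorePoly q n + nonbacktrackingPoly q (n + 1) := by
  rw [nonbacktrackingPoly, add_sub_cancel]

lemma nonbacktrackingPoly_one : nonbacktrackingPoly q 1 = X := by
  simp [nonbacktrackingPoly, moorePoly]

lemma nonbacktrackingPoly_two : nonbacktrackingPoly q 2 = X ^ 2 - C (q + 1) := by
  simp only [nonbacktrackingPoly, moorePoly, map_add, map_one]
  ring

lemma nonbacktrackingPoly_add_three (n : ℕ) :
    nonbacktrackingPoly q (n + 3) =
      X * nonbacktrackingPoly q (n + 2) - C q * nonbacktrackingPoly q (n + 1) := by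
  simp only [nonbacktrackingPoly, moorePoly]
  ring

lemma nonbacktrackingPoly_mul_moorePoly (i j : ℕ) :
    nonbacktrackingPoly q (i + 2) * moorePoly q (j + 1) =
      C q * (nonbacktrackingPoly q (i + 1) * moorePoly q j) +
        (nonbacktrackingPoly q (i + j + 2) + nonbacktrackingPoly q (i + j + 3)) := by
  induction j using Nat.twoStepInduction with
  | zero =>
    simp only [moorePoly, add_zero, nonbacktrackingPoly_add_three]
    ring
  | one =>
    simp only [moorePoly, nonbacktrackingPoly_add_three]
    ring
  | more j ih₀ ih₁ =>
    rw [show i + (j + 1) + 2 = i + j + 3 by ring] at ih₁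
    have hF₀ : nonbacktrackingPoly q (i + (j + 2) + 2) =
        X * nonbacktrackingPoly q (i + j + 3) - C q * nonbacktrackingPoly q (i + j + 2) :=
      nonbacktrackingPoly_add_three q (i + j + 1)
    have hF₁ : nonbacktrackingPoly q (i + (j + 2) + 3) =
        X * nonbacktrackingPoly q (i + (j + 1) + 3) - C q * nonbacktrackingPoly q (i + j + 3) :=
      nonbacktrackingPoly_add_three q (i + j + 2)
    linear_combination X * ih₁ - C q * ih₀ - hF₀ - hF₁ +
      nonbacktrackingPoly q (i + 2) * moorePoly_add_two q (j + 1) -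
      C q * nonbacktrackingPoly q (i + 1) * moorePoly_add_two q j

lemma nonbacktrackingPoly_eval_add_one (n : ℕ) :
    (nonbacktrackingPoly q (n + 1)).eval (q + 1) = (q + 1) * q ^ n := by
  induction n using Nat.twoStepInduction with
  | zero => simp [nonbacktrackingPoly_one]
  | one =>
    rw [nonbacktrackingPoly_two, eval_sub, eval_pow, eval_X, eval_C]
    ring
  | more n ih₀ ih₁ =>
    simp only [nonbacktrackingPoly_add_three, eval_sub, eval_mul, eval_X, eval_C, ih₀, ih₁]
    ring

lemma moorePoly_eval_add_one (n : ℕ) :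
    (moorePoly q n).eval (q + 1) = 1 + ∑ i ∈ range n, (q + 1) * q ^ i := by
  induction n with
  | zero => simp [moorePoly]
  | succ n ih =>
    rw [moorePoly_succ, eval_add, ih, nonbacktrackingPoly_eval_add_one, sum_range_succ, add_assoc]

lemma dickson_one_add_three (n : ℕ) :
    dickson 1 q (n + 3) = dickson 1 q (n + 1) +
      (nonbacktrackingPoly q (n + 3) - C q * nonbacktrackingPoly q (n + 1)) := by
  induction n using Nat.twoStepInduction with
  | zero =>
    simp only [dickson, nonbacktrackingPoly, moorePoly, Nat.cast_one]
    ring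
  | one =>
    simp only [dickson, nonbacktrackingPoly, moorePoly, Nat.cast_one]
    ring
  | more n ih₀ ih₁ =>
    rw [dickson_add_two, nonbacktrackingPoly_add_three]
    linear_combination X * ih₁ - C q * ih₀ - dickson_add_two 1 q (n + 1) +
      C q * nonbacktrackingPoly_add_three q n

lemma dickson_one_two_mul_add_one (n : ℕ) :
    dickson 1 q (2 * n + 1) = nonbacktrackingPoly q (2 * n + 1) -
      C (q - 1) * ∑ i ∈ range n, nonbacktrackingPoly q (2 * i + 1) := by
  induction n with
  | zero => simp [nonbacktrackingPoly_one]
  | succ n ih =>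
    rw [show 2 * (n + 1) + 1 = 2 * n + 3 by ring, dickson_one_add_three, ih, sum_range_succ,
      map_sub, map_one]
    ring

lemma eval_add_dickson_one_mul (x y : R) :
    ∀ n, (dickson 1 (x * y) n).eval (x + y) = x ^ n + y ^ n
  | 0 => by norm_num [dickson_zero]
  | 1 => by simp only [dickson_one, eval_X, pow_one]
  | n + 2 => by
    simp only [dickson_add_two, eval_sub, eval_mul, eval_X, eval_C,
      eval_add_dickson_one_mul x y n, eval_add_dickson_one_mul x y (n + 1)]
    ring

lemma exists_add_eq_and_mul_eq {K : Type*} [Field K] [IsAlgClosed K] (s t : K) :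
    ∃ x y : K, x + y = s ∧ x * y = t := by
  have hdeg : (X ^ 2 - C s * X + C t : K[X]).degree ≠ 0 := by
    rw [show (X ^ 2 - C s * X + C t : K[X]).degree = 2 by compute_degree!]
    decide
  obtain ⟨x, hx⟩ := IsAlgClosed.exists_root _ hdeg
  simp only [IsRoot, eval_add, eval_sub, eval_pow, eval_mul, eval_X, eval_C] at hx
  exact ⟨x, s - x, by ring, by linear_combination -hx⟩

-- In an algebraically closed extension write `X = x + y` and `q = x * y`: then
-- `dickson 1 q n = xⁿ + yⁿ`, and taking `p`-th powers is additive.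
lemma dickson_one_mul_char [IsDomain R] (p r : ℕ) [Fact p.Prime] [CharP R p] :
    dickson 1 q (r * p) = dickson 1 q r ^ p := by
  let K := AlgebraicClosure (FractionRing R[X])
  let φ : R[X] →+* K := (algebraMap (FractionRing R[X]) K).comp (algebraMap R[X] _)
  have hφ : Function.Injective φ :=
    (algebraMap (FractionRing R[X]) K).injective.comp (IsFractionRing.injective R[X] _)
  have : CharP K p := charP_of_injective_ringHom (f := φ.comp C) (hφ.comp C_injective) p
  obtain ⟨x, y, hadd, hmul⟩ := exists_add_eq_and_mul_eq (φ X) (φ (C q))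
  have hdickson (n : ℕ) : φ (dickson 1 q n) = x ^ n + y ^ n := by
    rw [← eval_add_dickson_one_mul, hadd, hmul, ← RingHom.comp_apply, ← map_dickson, eval_map,
      ← hom_eval₂, eval₂_C_X]
  apply hφ
  rw [map_pow, hdickson, hdickson, add_pow_char, pow_mul, pow_mul]

end Polynomials

section MatrixPolynomials

variable {V R : Type*} [Fintype V] [DecidableEq V] [CommRing R]

lemma trace_aeval_dickson_one_mul_prime (A : Matrix V V ℤ) (q : ℤ) (p r : ℕ) [Fact p.Prime] :
    ((aeval A (dickson 1 q (r * p))).trace : ZMod p) = (aeval A (dickson 1 q r)).trace ^ p := by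
  have htrace (P : ℤ[X]) : ((aeval A P).trace : ZMod p) =
      (aeval (A.map (Int.castRingHom (ZMod p))) (P.map (Int.castRingHom (ZMod p)))).trace := by
    rw [← eq_intCast (Int.castRingHom (ZMod p)), AddMonoidHom.map_trace]
    congr 1
    exact map_aeval_eq_aeval_map (φ := Int.castRingHom (ZMod p))
      (ψ := (Int.castRingHom (ZMod p)).mapMatrix)
      (by ext; simp) P A
  rw [htrace, htrace, map_dickson, map_dickson, dickson_one_mul_char, map_pow, ZMod.trace_pow_card]

lemma sum_aeval_apply {A : Matrix V V R} {k : R} (h : ∀ v, ∑ w, A v w = k) (P : R[X]) (v : V) :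
    ∑ w, aeval A P v w = P.eval k := by
  have hA : toLinAlgEquiv' A 1 = k • 1 := by
    ext v
    simp [mulVec, dotProduct, h]
  have hP := Module.End.aeval_apply_of_mem_apply_eq_smul (p := P) hA
  rw [aeval_algEquiv] at hP
  simpa [mulVec, dotProduct] using congrFun hP v

lemma isSymm_aeval {A : Matrix V V R} (hA : A.IsSymm) (P : R[X]) : (aeval A P).IsSymm := by
  rw [aeval_eq_sum_range]
  simp only [IsSymm, transpose_sum, transpose_smul, transpose_pow, hA.eq]

lemma aeval_adjMatrix_apply_iso {G : SimpleGraph V} [DecidableRel G.Adj] (φ : G ≃g G) (P : R[X])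
    (v w : V) : aeval (G.adjMatrix R) P (φ v) (φ w) = aeval (G.adjMatrix R) P v w := by
  have hφ : reindexAlgEquiv R R φ.toEquiv (G.adjMatrix R) = G.adjMatrix R :=
    φ.reindex_adjMatrix R
  have h := aeval_algEquiv (reindexAlgEquiv R R φ.toEquiv) (G.adjMatrix R)
  rw [hφ] at h
  calc aeval (G.adjMatrix R) P (φ v) (φ w)
    _ = aeval (G.adjMatrix R) P (φ.symm (φ v)) (φ.symm (φ w)) :=
      congrFun₂ (DFunLike.congr_fun h P) (φ v) (φ w)
    _ = aeval (G.adjMatrix R) P v w := by rw [φ.symm_apply_apply, φ.symm_apply_apply]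

end MatrixPolynomials

section Hashimoto

lemma mul_apply_nonneg {l m n R : Type*} [Fintype m] [Semiring R] [PartialOrder R]
    [IsOrderedRing R] {M : Matrix l m R} {N : Matrix m n R} (hM : ∀ i j, 0 ≤ M i j)
    (hN : ∀ i j, 0 ≤ N i j) (i : l) (j : n) : 0 ≤ (M * N) i j := by
  rw [mul_apply]
  exact sum_nonneg fun x _ => mul_nonneg (hM i x) (hN x j)

variable {V : Type*} [Fintype V] [DecidableEq V] (G : SimpleGraph V)

/-- The Hashimoto matrix of a graph: the transition matrix on darts of nonbacktracking walks. -/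
def hashimotoMatrix : Matrix G.Dart G.Dart ℤ :=
  of fun e f => if e.snd = f.fst ∧ f ≠ e.symm then 1 else 0

/-- The incidence matrix between the darts of a graph and their second endpoints. -/
def headMatrix : Matrix G.Dart V ℤ := of fun e v => if e.snd = v then 1 else 0

/-- The incidence matrix between the darts of a graph and their first endpoints. -/
def tailMatrix : Matrix G.Dart V ℤ := of fun e v => if e.fst = v then 1 else 0

lemma hashimotoMatrix_eq : hashimotoMatrix G =
    headMatrix G * (tailMatrix G)ᵀ -
      (1 : Matrix G.Dart G.Dart ℤ).submatrix SimpleGraph.Dart.symm (Equiv.refl _) := by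
  ext e f
  have hsymm (h : f = e.symm) : e.snd = f.fst := by rw [h]; rfl
  simp only [hashimotoMatrix, headMatrix, tailMatrix, of_apply, Matrix.sub_apply,
    mul_apply, transpose_apply, submatrix_apply, one_apply, Equiv.refl_apply]
  rw [Fintype.sum_eq_single f.fst fun x hx => by rw [if_neg hx.symm, mul_zero]]
  grind

variable [DecidableRel G.Adj]

lemma transpose_tailMatrix_mul_headMatrix :
    (tailMatrix G)ᵀ * headMatrix G = G.adjMatrix ℤ := by
  ext v w
  simp only [tailMatrix, headMatrix, mul_apply, transpose_apply, of_apply, ite_mul, one_mul,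
    zero_mul, ← ite_and, SimpleGraph.adjMatrix_apply]
  split_ifs with hvw
  · rw [sum_eq_single (⟨(v, w), hvw⟩ : G.Dart), if_pos ⟨rfl, rfl⟩]
    · intro e _ he
      exact if_neg fun h : e.fst = v ∧ e.snd = w => he (SimpleGraph.Dart.ext _ _ (Prod.ext h.1 h.2))
    · simp
  · exact sum_eq_zero fun e _ => if_neg fun h : e.fst = v ∧ e.snd = w =>
      hvw (h.1 ▸ h.2 ▸ e.adj)

lemma transpose_tailMatrix_mul_tailMatrix {k : ℕ} (hG : G.IsRegularOfDegree k) :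
    (tailMatrix G)ᵀ * tailMatrix G = (k : ℤ) • 1 := by
  ext v w
  simp only [tailMatrix, mul_apply, transpose_apply, of_apply, mul_ite, mul_one, mul_zero,
    ← ite_and, Matrix.smul_apply, one_apply, smul_eq_mul]
  rcases eq_or_ne v w with rfl | hvw
  · simp only [and_self, sum_boole, if_true, G.dart_fst_fiber_card_eq_degree, hG v]
  · rw [if_neg hvw]
    exact sum_eq_zero fun e _ => if_neg fun h : e.fst = w ∧ e.fst = v =>
      hvw (h.2 ▸ h.1)

lemma hashimotoMatrix_mul_headMatrix :
    hashimotoMatrix G * headMatrix G = headMatrix G * G.adjMatrix ℤ - tailMatrix G := by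
  rw [hashimotoMatrix_eq, Matrix.sub_mul, Matrix.mul_assoc, transpose_tailMatrix_mul_headMatrix,
    one_submatrix_mul]
  rfl

lemma hashimotoMatrix_mul_tailMatrix {q : ℕ} (hG : G.IsRegularOfDegree (q + 1)) :
    hashimotoMatrix G * tailMatrix G = (q : ℤ) • headMatrix G := by
  have hreverse : (tailMatrix G).submatrix ((Equiv.refl _).symm ∘ SimpleGraph.Dart.symm) id =
      headMatrix G := rfl
  rw [hashimotoMatrix_eq, Matrix.sub_mul, Matrix.mul_assoc, one_submatrix_mul, hreverse,
    transpose_tailMatrix_mul_tailMatrix G hG, Matrix.mul_smul, Matrix.mul_one, Nat.cast_succ,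
    add_smul, one_smul, add_sub_cancel_right]

/-- The number of nonbacktracking walks of length `n` between two vertices of a
`(q + 1)`-regular graph, as a polynomial in the adjacency matrix. -/
noncomputable def nonbacktrackingMatrix (q n : ℕ) : Matrix V V ℤ :=
  aeval (G.adjMatrix ℤ) (nonbacktrackingPoly (q : ℤ) n)

lemma transpose_tailMatrix_mul_hashimotoMatrix_pow {q : ℕ} (hG : G.IsRegularOfDegree (q + 1))
    (n : ℕ) : (tailMatrix G)ᵀ * (hashimotoMatrix G ^ n * headMatrix G) =
      nonbacktrackingMatrix G q (n + 1) := by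
  induction n using Nat.twoStepInduction with
  | zero =>
    rw [pow_zero, Matrix.one_mul, transpose_tailMatrix_mul_headMatrix, nonbacktrackingMatrix,
      nonbacktrackingPoly_one, aeval_X]
  | one =>
    rw [pow_one, hashimotoMatrix_mul_headMatrix, Matrix.mul_sub, ← Matrix.mul_assoc,
      transpose_tailMatrix_mul_headMatrix, transpose_tailMatrix_mul_tailMatrix G hG,
      nonbacktrackingMatrix, nonbacktrackingPoly_two]
    simp [sq, add_smul]
  | more n ih₀ ih₁ =>
    have hstep : hashimotoMatrix G ^ (n + 2) * headMatrix G =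
        hashimotoMatrix G ^ (n + 1) * headMatrix G * G.adjMatrix ℤ -
          (q : ℤ) • (hashimotoMatrix G ^ n * headMatrix G) := by
      rw [pow_succ _ (n + 1), Matrix.mul_assoc, hashimotoMatrix_mul_headMatrix, Matrix.mul_sub,
        ← Matrix.mul_assoc, pow_succ _ n, Matrix.mul_assoc _ _ (tailMatrix G),
        hashimotoMatrix_mul_tailMatrix G hG, Matrix.mul_smul]
    rw [hstep, Matrix.mul_sub, ← Matrix.mul_assoc, ih₁, Matrix.mul_smul, ih₀]
    simp only [nonbacktrackingMatrix, nonbacktrackingPoly_add_three, mul_comm X]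
    simp

lemma nonbacktrackingMatrix_nonneg {q : ℕ} (hG : G.IsRegularOfDegree (q + 1)) (n : ℕ) (v w : V) :
    0 ≤ nonbacktrackingMatrix G q n v w := by
  cases n with
  | zero =>
    rw [nonbacktrackingMatrix, nonbacktrackingPoly, map_one, one_apply]
    positivity
  | succ n =>
    have hhead (e v) : 0 ≤ headMatrix G e v := by rw [headMatrix, of_apply]; positivity
    have htail (v e) : 0 ≤ (tailMatrix G)ᵀ v e := by
      rw [transpose_apply, tailMatrix, of_apply]; positivity
    have hpow (e f) : 0 ≤ (hashimotoMatrix G ^ n) e f :=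
      pow_apply_nonneg (fun e f => by rw [hashimotoMatrix, of_apply]; positivity) n e f
    rw [← transpose_tailMatrix_mul_hashimotoMatrix_pow G hG]
    exact mul_apply_nonneg htail (mul_apply_nonneg hpow hhead) v w

end Hashimoto

section MooreMatrix

lemma sum_adjMatrix_apply {V : Type*} [Fintype V] {G : SimpleGraph V} [DecidableRel G.Adj] {k : ℕ}
    (hG : G.IsRegularOfDegree k) (v : V) : ∑ w, G.adjMatrix ℤ v w = k := by
  simp only [SimpleGraph.adjMatrix_apply, sum_boole, ← G.neighborFinset_eq_filter,
    G.card_neighborFinset_eq_degree, hG v]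

variable {V : Type*} [Fintype V] [DecidableEq V] {G : SimpleGraph V} [DecidableRel G.Adj] {q : ℕ}

variable (G q) in
/-- The number of nonbacktracking walks of length at most `n` between two vertices of a
`(q + 1)`-regular graph, as a polynomial in the adjacency matrix. -/
noncomputable def mooreMatrix (n : ℕ) : Matrix V V ℤ :=
  aeval (G.adjMatrix ℤ) (moorePoly (q : ℤ) n)

lemma mooreMatrix_zero : mooreMatrix G q 0 = 1 := by
  rw [mooreMatrix, moorePoly, map_one]

lemma mooreMatrix_succ (n : ℕ) :
    mooreMatrix G q (n + 1) = mooreMatrix G q n + nonbacktrackingMatrix G q (n + 1) := by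
  rw [mooreMatrix, moorePoly_succ, map_add]
  rfl

lemma adjMatrix_mul_mooreMatrix_succ (n : ℕ) :
    G.adjMatrix ℤ * mooreMatrix G q (n + 1) =
      mooreMatrix G q (n + 2) + (q : ℤ) • mooreMatrix G q n := by
  rw [mooreMatrix, mooreMatrix, moorePoly_add_two]
  simp [mooreMatrix]

lemma nonbacktrackingMatrix_mul_mooreMatrix (i j : ℕ) :
    nonbacktrackingMatrix G q (i + 2) * mooreMatrix G q (j + 1) =
      (q : ℤ) • (nonbacktrackingMatrix G q (i + 1) * mooreMatrix G q j) +
        (nonbacktrackingMatrix G q (i + j + 2) + nonbacktrackingMatrix G q (i + j + 3)) := by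
  simp only [nonbacktrackingMatrix, mooreMatrix, ← map_mul, ← map_add, ← map_smul,
    nonbacktrackingPoly_mul_moorePoly, smul_eq_C_mul]

lemma mooreMatrix_mono (hG : G.IsRegularOfDegree (q + 1)) {m n : ℕ} (hmn : m ≤ n) (v w : V) :
    mooreMatrix G q m v w ≤ mooreMatrix G q n v w := by
  refine monotone_nat_of_le_succ (f := fun n => mooreMatrix G q n v w) (fun n => ?_) hmn
  rw [mooreMatrix_succ, Matrix.add_apply]
  exact le_add_of_nonneg_right (nonbacktrackingMatrix_nonneg G hG _ v w)

lemma mooreMatrix_nonneg (hG : G.IsRegularOfDegree (q + 1)) (n : ℕ) (v w : V) :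
    0 ≤ mooreMatrix G q n v w := by
  have hone : 0 ≤ (1 : Matrix V V ℤ) v w := by rw [one_apply]; positivity
  exact (mooreMatrix_zero (G := G) (q := q) ▸ hone).trans (mooreMatrix_mono hG n.zero_le v w)

lemma one_le_mooreMatrix_self (hG : G.IsRegularOfDegree (q + 1)) (n : ℕ) (v : V) :
    1 ≤ mooreMatrix G q n v v := by
  simpa [mooreMatrix_zero] using mooreMatrix_mono hG n.zero_le v v

lemma sum_nonbacktrackingMatrix_succ (hG : G.IsRegularOfDegree (q + 1)) (n : ℕ) (v : V) :
    ∑ w, nonbacktrackingMatrix G q (n + 1) v w = (q + 1) * q ^ n := by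
  rw [nonbacktrackingMatrix, sum_aeval_apply (sum_adjMatrix_apply hG), Nat.cast_succ,
    nonbacktrackingPoly_eval_add_one]

lemma sum_mooreMatrix (hG : G.IsRegularOfDegree (q + 1)) (n : ℕ) (v : V) :
    ∑ w, mooreMatrix G q n v w = mooreBound (q + 1) n := by
  rw [mooreMatrix, sum_aeval_apply (sum_adjMatrix_apply hG), Nat.cast_succ,
    moorePoly_eval_add_one, mooreBound]
  push_cast
  rfl

lemma adjMatrix_mul_mooreMatrix_le (hG : G.IsRegularOfDegree (q + 1)) (n : ℕ) (v w : V) :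
    (G.adjMatrix ℤ * mooreMatrix G q n) v w ≤ (q + 1) * mooreMatrix G q (n + 1) v w := by
  cases n with
  | zero =>
    have hA : 0 ≤ G.adjMatrix ℤ v w := by rw [SimpleGraph.adjMatrix_apply]; positivity
    have hone : 0 ≤ (1 : Matrix V V ℤ) v w := by rw [one_apply]; positivity
    rw [mooreMatrix_zero, Matrix.mul_one, mooreMatrix, moorePoly, map_add, aeval_X, map_one,
      Matrix.add_apply]
    nlinarith
  | succ n =>
    have hmono := mooreMatrix_mono hG (show n ≤ n + 2 by lia) v w
    rw [adjMatrix_mul_mooreMatrix_succ, Matrix.add_apply, Matrix.smul_apply, smul_eq_mul, add_mul,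
      one_mul, add_comm]
    gcongr

lemma nonbacktrackingMatrix_succ_le_adjMatrix_mul (hG : G.IsRegularOfDegree (q + 1)) (n : ℕ)
    (v w : V) :
    nonbacktrackingMatrix G q (n + 1) v w ≤ (G.adjMatrix ℤ * mooreMatrix G q n) v w := by
  cases n with
  | zero =>
    rw [mooreMatrix_zero, Matrix.mul_one, nonbacktrackingMatrix, nonbacktrackingPoly_one, aeval_X]
  | succ n =>
    rw [adjMatrix_mul_mooreMatrix_succ, mooreMatrix_succ (n + 1), Matrix.add_apply,
      Matrix.add_apply, Matrix.smul_apply]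
    have hS₀ := mooreMatrix_nonneg hG n v w
    have hS₁ := mooreMatrix_nonneg hG (n + 1) v w
    have hqS : 0 ≤ (q : ℤ) • mooreMatrix G q n v w := by positivity
    linarith

lemma mooreMatrix_two_self (hG : G.IsRegularOfDegree (q + 1)) (v : V) :
    mooreMatrix G q 2 v v = 1 := by
  rw [mooreMatrix, moorePoly, moorePoly, moorePoly, map_sub, map_mul, map_mul, map_add, aeval_X,
    aeval_C, map_one, Matrix.mul_add, Matrix.mul_one, Matrix.mul_one, Matrix.sub_apply,
    Matrix.add_apply, G.adjMatrix_mul_self_apply_self, hG v, algebraMap_matrix_apply]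
  simp

lemma mooreMatrix_length_pos (hG : G.IsRegularOfDegree (q + 1)) {v w : V} (p : G.Walk v w) :
    0 < mooreMatrix G q p.length v w := by
  induction p with
  | nil => simp [mooreMatrix_zero]
  | @cons u v w huv p ih =>
    have hle : mooreMatrix G q p.length v w ≤
        (G.adjMatrix ℤ * mooreMatrix G q p.length) u w := by
      rw [mul_apply]
      refine le_trans ?_ (single_le_sum (fun x _ => mul_nonneg ?_ (mooreMatrix_nonneg hG _ x w))
        (mem_univ v))
      · simp [huv]
      · rw [SimpleGraph.adjMatrix_apply]; positivity
    have hstep := hle.trans (adjMatrix_mul_mooreMatrix_le hG p.length u w)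
    exact pos_of_mul_pos_right (ih.trans_le hstep) (by positivity)

lemma one_le_mooreMatrix_of_dist_le (hG : G.IsRegularOfDegree (q + 1)) (hconn : G.Connected)
    {n : ℕ} {v w : V} (h : G.dist v w ≤ n) : 1 ≤ mooreMatrix G q n v w := by
  obtain ⟨p, hp⟩ := hconn.exists_walk_length_eq_dist v w
  exact (mooreMatrix_length_pos hG p).trans_le (mooreMatrix_mono hG (hp ▸ h) v w)

lemma pow_mul_nonbacktrackingMatrix_mul_mooreMatrix_le (hG : G.IsRegularOfDegree (q + 1))
    (i j n : ℕ) (v w : V) :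
    q ^ n * (nonbacktrackingMatrix G q (i + 1) * mooreMatrix G q j) v w ≤
      (nonbacktrackingMatrix G q (i + n + 1) * mooreMatrix G q (j + n)) v w := by
  induction n with
  | zero => simp
  | succ n ih =>
    have hF := nonbacktrackingMatrix_nonneg G hG (q := q)
    rw [← add_assoc i, ← add_assoc j, nonbacktrackingMatrix_mul_mooreMatrix, Matrix.add_apply,
      Matrix.smul_apply, smul_eq_mul, Matrix.add_apply, pow_succ', mul_assoc]
    nlinarith [hF (i + n + (j + n) + 2) v w, hF (i + n + (j + n) + 3) v w,
      mul_le_mul_of_nonneg_left ih (Nat.cast_nonneg (α := ℤ) q)]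

lemma le_nonbacktrackingMatrix_mul_mooreMatrix (hG : G.IsRegularOfDegree (q + 1)) (hq : 1 ≤ q)
    (j n : ℕ) (v w : V) :
    q ^ n * (G.adjMatrix ℤ * mooreMatrix G q j) v w +
        (mooreMatrix G q (2 * n + j + 1) v w - mooreMatrix G q (j + 1) v w) ≤
      (nonbacktrackingMatrix G q (n + 1) * mooreMatrix G q (n + j)) v w := by
  induction n with
  | zero => simp [nonbacktrackingMatrix, nonbacktrackingPoly_one]
  | succ n ih =>
    have hmono := mooreMatrix_mono hG (show j + 1 ≤ 2 * n + j + 1 by lia) v w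
    have hmoore : mooreMatrix G q (n + (n + j) + 3) = mooreMatrix G q (n + (n + j) + 1) +
        nonbacktrackingMatrix G q (n + (n + j) + 2) +
        nonbacktrackingMatrix G q (n + (n + j) + 3) := by
      rw [mooreMatrix_succ, mooreMatrix_succ]
    rw [show n + 1 + j = n + j + 1 by ring, nonbacktrackingMatrix_mul_mooreMatrix, pow_succ,
      show 2 * (n + 1) + j + 1 = n + (n + j) + 3 by ring, hmoore,
      show n + (n + j) + 1 = 2 * n + j + 1 by ring]
    simp only [Matrix.add_apply, Matrix.smul_apply, smul_eq_mul]
    nlinarith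

lemma sum_nonbacktrackingMatrix_odd_le (hG : G.IsRegularOfDegree (q + 1)) (n : ℕ) (v : V) :
    1 + ∑ i ∈ range n, nonbacktrackingMatrix G q (2 * i + 1) v v ≤ mooreMatrix G q (2 * n) v v := by
  induction n with
  | zero => simp [mooreMatrix_zero]
  | succ n ih =>
    have hF := nonbacktrackingMatrix_nonneg G hG (2 * n + 2) v v
    rw [show 2 * (n + 1) = 2 * n + 1 + 1 by ring, mooreMatrix_succ, mooreMatrix_succ,
      sum_range_succ]
    simp only [Matrix.add_apply]
    linarith

lemma aeval_dickson_apply (n : ℕ) (v w : V) :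
    aeval (G.adjMatrix ℤ) (dickson 1 (q : ℤ) (2 * n + 1)) v w =
      nonbacktrackingMatrix G q (2 * n + 1) v w -
        (q - 1) * ∑ i ∈ range n, nonbacktrackingMatrix G q (2 * i + 1) v w := by
  rw [dickson_one_two_mul_add_one, ← smul_eq_C_mul, map_sub, map_smul, map_sum, Matrix.sub_apply,
    Matrix.smul_apply, Matrix.sum_apply, smul_eq_mul]
  rfl

end MooreMatrix

section Defect

variable {V : Type*} [Fintype V]

variable (V) in
/-- The defect `M(k, d) - |V|` of a `k`-regular graph of diameter `d` on the vertex set `V`. -/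
def mooreDefect (k d : ℕ) : ℤ := mooreBound k d - Fintype.card V

variable [DecidableEq V] {G : SimpleGraph V} [DecidableRel G.Adj] {q d e : ℕ} {v : V}

lemma sum_mooreMatrix_sub_one (hG : G.IsRegularOfDegree (q + 1)) (d : ℕ) (v : V) :
    ∑ w, (mooreMatrix G q d v w - 1) = mooreDefect V (q + 1) d := by
  rw [sum_sub_distrib, sum_mooreMatrix hG, sum_const, card_univ, nsmul_one, mooreDefect]

lemma mooreDefect_nonneg (hG : G.IsRegularOfDegree (q + 1))
    (hv : ∀ w, 1 ≤ mooreMatrix G q d v w) : 0 ≤ mooreDefect V (q + 1) d :=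
  sum_mooreMatrix_sub_one hG d v ▸ sum_nonneg fun w _ => sub_nonneg.2 (hv w)

lemma mooreMatrix_sub_one_le (hG : G.IsRegularOfDegree (q + 1))
    (hv : ∀ w, 1 ≤ mooreMatrix G q d v w) (w : V) :
    mooreMatrix G q d v w - 1 ≤ mooreDefect V (q + 1) d :=
  sum_mooreMatrix_sub_one hG d v ▸
    single_le_sum (fun w _ => sub_nonneg.2 (hv w)) (mem_univ w)

lemma sum_mul_mooreMatrix_sub_one_le (hG : G.IsRegularOfDegree (q + 1))
    (hv : ∀ w, 1 ≤ mooreMatrix G q d v w) {f : V → ℤ} {B : ℤ} (hf : ∀ w, f w ≤ B) :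
    ∑ w, f w * (mooreMatrix G q d v w - 1) ≤ B * mooreDefect V (q + 1) d := by
  rw [← sum_mooreMatrix_sub_one hG d v, mul_sum]
  exact sum_le_sum fun w _ => mul_le_mul_of_nonneg_right (hf w) (sub_nonneg.2 (hv w))

lemma sum_sq_mooreMatrix_sub_one_le (hG : G.IsRegularOfDegree (q + 1))
    (hv : ∀ w, 1 ≤ mooreMatrix G q d v w) :
    ∑ w, (mooreMatrix G q d v w - 1) ^ 2 ≤ mooreDefect V (q + 1) d ^ 2 := by
  simp only [sq]
  exact sum_mul_mooreMatrix_sub_one_le hG hv (mooreMatrix_sub_one_le hG hv)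

lemma nonbacktrackingMatrix_mul_mooreMatrix_self (m n : ℕ) (v : V) :
    (nonbacktrackingMatrix G q m * mooreMatrix G q n) v v =
      ∑ w, nonbacktrackingMatrix G q m v w * mooreMatrix G q n v w := by
  have hsymm : (mooreMatrix G q n).IsSymm := isSymm_aeval G.isSymm_adjMatrix _
  simp only [mul_apply, hsymm.apply]

lemma nonbacktrackingMatrix_mul_mooreMatrix_self_le_sq (hG : G.IsRegularOfDegree (q + 1))
    (hv : ∀ w, 1 ≤ mooreMatrix G q (e + 1) v w) :
    (nonbacktrackingMatrix G q (e + 1) * mooreMatrix G q e) v v ≤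
      mooreDefect V (q + 1) (e + 1) ^ 2 := by
  rw [nonbacktrackingMatrix_mul_mooreMatrix_self]
  refine (sum_le_sum fun w _ => ?_).trans (sum_sq_mooreMatrix_sub_one_le hG hv)
  have hw := hv w
  have hF := nonbacktrackingMatrix_nonneg G hG (e + 1) v w
  have hS := mooreMatrix_nonneg hG e v w
  rw [mooreMatrix_succ, Matrix.add_apply] at hw ⊢
  rcases hF.eq_or_lt with hF₀ | hF₁
  · rw [← hF₀, zero_mul]
    positivity
  · rcases hS.eq_or_lt with hS₀ | hS₁
    · rw [← hS₀, mul_zero]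
      positivity
    · nlinarith [mul_pos hF₁ hS₁]

lemma nonbacktrackingMatrix_mul_mooreMatrix_self_eq (hG : G.IsRegularOfDegree (q + 1)) (m n : ℕ) :
    (nonbacktrackingMatrix G q (m + 1) * mooreMatrix G q n) v v = (q + 1) * q ^ m +
      ∑ w, nonbacktrackingMatrix G q (m + 1) v w * (mooreMatrix G q n v w - 1) := by
  rw [nonbacktrackingMatrix_mul_mooreMatrix_self, ← sum_nonbacktrackingMatrix_succ hG m v,
    ← sum_add_distrib]
  exact sum_congr rfl fun w _ => by ring

lemma mooreMatrix_two_mul_self_sub_one_le (hG : G.IsRegularOfDegree (q + 1)) (hq : 1 ≤ q)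
    (hv : ∀ w, 1 ≤ mooreMatrix G q (e + 1) v w) :
    mooreMatrix G q (2 * (e + 1)) v v - 1 ≤
      mooreDefect V (q + 1) (e + 1) + mooreDefect V (q + 1) (e + 1) ^ 2 := by
  have hA : (G.adjMatrix ℤ * mooreMatrix G q 1) v v = q + 1 := by
    rw [adjMatrix_mul_mooreMatrix_succ, mooreMatrix_zero, Matrix.add_apply, mooreMatrix_two_self hG]
    simp [add_comm]
  have hlower := le_nonbacktrackingMatrix_mul_mooreMatrix hG hq 1 e v v
  rw [hA, mooreMatrix_two_self hG, nonbacktrackingMatrix_mul_mooreMatrix_self_eq hG] at hlower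
  have hupper : ∑ w, nonbacktrackingMatrix G q (e + 1) v w * (mooreMatrix G q (e + 1) v w - 1) ≤
      ∑ w, ((mooreMatrix G q (e + 1) v w - 1) + (mooreMatrix G q (e + 1) v w - 1) ^ 2) := by
    refine sum_le_sum fun w _ => ?_
    have hS := mooreMatrix_nonneg hG e v w
    have hsucc : mooreMatrix G q (e + 1) v w =
      mooreMatrix G q e v w + nonbacktrackingMatrix G q (e + 1) v w := by
      rw [mooreMatrix_succ, Matrix.add_apply]
    nlinarith [hv w]
  rw [sum_add_distrib, sum_mooreMatrix_sub_one hG] at hupper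
  have hsq := sum_sq_mooreMatrix_sub_one_le hG hv
  rw [show 2 * e + 1 + 1 = 2 * (e + 1) by ring] at hlower
  linarith

lemma le_nonbacktrackingMatrix_succ_mul_mooreMatrix_self (hG : G.IsRegularOfDegree (q + 1))
    (hv : ∀ w, 1 ≤ mooreMatrix G q d v w) :
    (q + 1) * q ^ d ≤ (nonbacktrackingMatrix G q (d + 1) * mooreMatrix G q d) v v := by
  rw [nonbacktrackingMatrix_mul_mooreMatrix_self_eq hG]
  exact le_add_of_nonneg_right <| sum_nonneg fun w _ =>
    mul_nonneg (nonbacktrackingMatrix_nonneg G hG _ v w) (sub_nonneg.2 (hv w))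

lemma nonbacktrackingMatrix_succ_le (hG : G.IsRegularOfDegree (q + 1))
    (hv : ∀ w, 1 ≤ mooreMatrix G q d v w) (w : V) :
    nonbacktrackingMatrix G q (d + 1) v w ≤ q + 1 + mooreDefect V (q + 1) d := by
  have hF : (nonbacktrackingMatrix G q (d + 1)).IsSymm := isSymm_aeval G.isSymm_adjMatrix _
  have hS : (mooreMatrix G q d).IsSymm := isSymm_aeval G.isSymm_adjMatrix _
  have hA (x : V) : G.adjMatrix ℤ w x ≤ 1 := by
    rw [SimpleGraph.adjMatrix_apply]
    split_ifs <;> norm_num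
  calc nonbacktrackingMatrix G q (d + 1) v w
    _ = nonbacktrackingMatrix G q (d + 1) w v := hF.apply w v
    _ ≤ (G.adjMatrix ℤ * mooreMatrix G q d) w v :=
      nonbacktrackingMatrix_succ_le_adjMatrix_mul hG d w v
    _ = ∑ x, G.adjMatrix ℤ w x + ∑ x, G.adjMatrix ℤ w x * (mooreMatrix G q d v x - 1) := by
      rw [mul_apply, ← sum_add_distrib]
      exact sum_congr rfl fun x _ => by rw [hS.apply v x]; ring
    _ ≤ q + 1 + mooreDefect V (q + 1) d := by
      rw [sum_adjMatrix_apply hG, Nat.cast_succ]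
      gcongr
      simpa using sum_mul_mooreMatrix_sub_one_le hG hv hA

lemma nonbacktrackingMatrix_succ_mul_mooreMatrix_self_le (hG : G.IsRegularOfDegree (q + 1))
    (hv : ∀ w, 1 ≤ mooreMatrix G q d v w) :
    (nonbacktrackingMatrix G q (d + 1) * mooreMatrix G q d) v v ≤
      (q + 1) * q ^ d + (q + 1 + mooreDefect V (q + 1) d) * mooreDefect V (q + 1) d := by
  rw [nonbacktrackingMatrix_mul_mooreMatrix_self_eq hG]
  gcongr
  exact sum_mul_mooreMatrix_sub_one_le hG hv (nonbacktrackingMatrix_succ_le hG hv)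

end Defect

section Core

variable {V : Type*} [Fintype V] [DecidableEq V] {G : SimpleGraph V} [DecidableRel G.Adj]
  {q d e m : ℕ} {v : V}

lemma aeval_dickson_self_le (hG : G.IsRegularOfDegree (q + 1)) (hq : 1 ≤ q)
    (hv : ∀ w, 1 ≤ mooreMatrix G q (e + 1) v w) :
    aeval (G.adjMatrix ℤ) (dickson 1 (q : ℤ) (2 * (e + 1) + 1)) v v ≤
      (q + 1) * q ^ (e + 1) + (q + 1 + mooreDefect V (q + 1) (e + 1)) *
        mooreDefect V (q + 1) (e + 1) := by
  have hF (n : ℕ) := nonbacktrackingMatrix_nonneg G hG n v v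
  have hprev : 0 ≤ (nonbacktrackingMatrix G q (e + 1) * mooreMatrix G q e) v v :=
    mul_apply_nonneg (nonbacktrackingMatrix_nonneg G hG _) (mooreMatrix_nonneg hG e) v v
  have hsum : 0 ≤ ∑ i ∈ range (e + 1), nonbacktrackingMatrix G q (2 * i + 1) v v :=
    sum_nonneg fun i _ => hF _
  have hstep := congrFun₂ (nonbacktrackingMatrix_mul_mooreMatrix (G := G) (q := q) e e) v v
  simp only [Matrix.add_apply, Matrix.smul_apply, smul_eq_mul, ← two_mul e] at hstep
  have hq' : (0 : ℤ) ≤ q - 1 := by lia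
  rw [aeval_dickson_apply, show 2 * (e + 1) + 1 = 2 * e + 3 by ring]
  linarith [nonbacktrackingMatrix_succ_mul_mooreMatrix_self_le hG hv, hF (2 * e + 2),
    mul_nonneg hq' hsum, mul_nonneg (Nat.cast_nonneg (α := ℤ) q) hprev]

lemma le_aeval_dickson_self (hG : G.IsRegularOfDegree (q + 1)) (hq : 1 ≤ q)
    (hv : ∀ w, 1 ≤ mooreMatrix G q (e + 1) v w) :
    (q + 1) * q ^ (e + 1) - q * (mooreDefect V (q + 1) (e + 1) +
        2 * mooreDefect V (q + 1) (e + 1) ^ 2) ≤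
      aeval (G.adjMatrix ℤ) (dickson 1 (q : ℤ) (2 * (e + 1) + 1)) v v := by
  have hmoore := mooreMatrix_two_mul_self_sub_one_le hG hq hv
  have hodd := sum_nonbacktrackingMatrix_odd_le hG (e + 1) v
  have heven : 1 + nonbacktrackingMatrix G q (2 * e + 2) v v ≤
      mooreMatrix G q (2 * (e + 1)) v v := by
    rw [show 2 * (e + 1) = 2 * e + 1 + 1 by ring, mooreMatrix_succ, Matrix.add_apply]
    gcongr
    exact one_le_mooreMatrix_self hG (2 * e + 1) v
  have hstep := congrFun₂ (nonbacktrackingMatrix_mul_mooreMatrix (G := G) (q := q) e e) v v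
  simp only [Matrix.add_apply, Matrix.smul_apply, smul_eq_mul, ← two_mul e] at hstep
  have hq' : (0 : ℤ) ≤ q - 1 := by lia
  rw [aeval_dickson_apply, show 2 * (e + 1) + 1 = 2 * e + 3 by ring]
  linarith [le_nonbacktrackingMatrix_succ_mul_mooreMatrix_self hG hv,
    mul_le_mul_of_nonneg_left (nonbacktrackingMatrix_mul_mooreMatrix_self_le_sq hG hv)
      (Nat.cast_nonneg (α := ℤ) q),
    mul_le_mul_of_nonneg_left (show ∑ i ∈ range (e + 1), nonbacktrackingMatrix G q (2 * i + 1) v v ≤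
      mooreDefect V (q + 1) (e + 1) + mooreDefect V (q + 1) (e + 1) ^ 2 by linarith) hq']

lemma abs_aeval_dickson_self_sub_le (hG : G.IsRegularOfDegree (q + 1)) (hq : 1 ≤ q)
    (hv : ∀ w, 1 ≤ mooreMatrix G q (e + 1) v w) :
    |aeval (G.adjMatrix ℤ) (dickson 1 (q : ℤ) (2 * (e + 1) + 1)) v v - (q + 1) * q ^ (e + 1)| ≤
      3 * q * mooreDefect V (q + 1) (e + 1) ^ 2 := by
  have hlower := le_aeval_dickson_self hG hq hv
  have hupper := aeval_dickson_self_le hG hq hv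
  have hsq := Int.le_self_sq (mooreDefect V (q + 1) (e + 1))
  rw [abs_le]
  constructor <;> nlinarith [sq_nonneg (mooreDefect V (q + 1) (e + 1))]

lemma aeval_dickson_self_eq_zero (hG : G.IsRegularOfDegree (q + 1)) (hq : 1 ≤ q)
    (hv : ∀ w, 1 ≤ mooreMatrix G q (e + 1) v w) (hme : m ≤ e)
    (hdefect : mooreDefect V (q + 1) (e + 1) ^ 2 < q ^ (e - m)) :
    aeval (G.adjMatrix ℤ) (dickson 1 (q : ℤ) (2 * m + 1)) v v = 0 := by
  have hgrowth := pow_mul_nonbacktrackingMatrix_mul_mooreMatrix_le hG m m (e - m) v v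
  rw [Nat.add_sub_cancel' hme] at hgrowth
  have hlast := nonbacktrackingMatrix_mul_mooreMatrix_self_le_sq hG hv
  have hTm : (nonbacktrackingMatrix G q (m + 1) * mooreMatrix G q m) v v ≤ 0 := by
    by_contra! hpos
    nlinarith [le_mul_of_one_le_right (pow_nonneg (Nat.cast_nonneg (α := ℤ) q) (e - m)) hpos]
  have hclosed := le_nonbacktrackingMatrix_mul_mooreMatrix hG hq 0 m v v
  have hone : mooreMatrix G q (2 * m + 1) v v ≤ 1 := by
    have hA : (G.adjMatrix ℤ * mooreMatrix G q 0) v v = 0 := by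
      rw [mooreMatrix_zero, Matrix.mul_one]
      simp
    have hS : mooreMatrix G q 1 v v = 1 := by simp [mooreMatrix, moorePoly]
    rw [hA, mul_zero, zero_add, add_zero, add_zero, zero_add, hS] at hclosed
    linarith
  have hodd := sum_nonbacktrackingMatrix_odd_le hG m v
  have hF := nonbacktrackingMatrix_nonneg G hG (2 * m + 1) v v
  have hsum : 0 ≤ ∑ i ∈ range m, nonbacktrackingMatrix G q (2 * i + 1) v v :=
    sum_nonneg fun i _ => nonbacktrackingMatrix_nonneg G hG _ v v
  rw [mooreMatrix_succ, Matrix.add_apply] at hone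
  rw [aeval_dickson_apply, show nonbacktrackingMatrix G q (2 * m + 1) v v = 0 by linarith,
    show ∑ i ∈ range m, nonbacktrackingMatrix G q (2 * i + 1) v v = 0 by linarith, mul_zero,
    sub_zero]

lemma pow_eq_or_eq_neg_of_two_mul_add_one_eq {p : ℕ} [Fact p.Prime] {x : ZMod p} (hx : x ≠ 0)
    (hd : 2 * d + 1 = (2 * m + 1) * p) : x ^ d = x ^ m ∨ x ^ d = -x ^ m := by
  have hpow : x ^ (2 * d + 1) = x ^ (2 * m + 1) := by rw [hd, pow_mul, ZMod.pow_card]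
  refine sq_eq_sq_iff_eq_or_eq_neg.1 (mul_right_cancel₀ hx ?_)
  rwa [← pow_mul', ← pow_mul', ← pow_succ, ← pow_succ]

lemma not_intCast_dvd_of_abs_sub_lt {p : ℕ} {a b z : ℤ}
    (hab : (a : ZMod p) = b ∨ (a : ZMod p) = -b) (hb : 2 * b < p) (hz : |z - a| < b) :
    ¬ (p : ℤ) ∣ z := by
  intro hdvd
  have hz₀ : (z : ZMod p) = 0 := (ZMod.intCast_zmod_eq_zero_iff_dvd z p).2 hdvd
  obtain ⟨hlower, hupper⟩ := abs_lt.1 hz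
  rcases hab with hab | hab
  · have hdvd' : (p : ℤ) ∣ z - a + b := by
      rw [← ZMod.intCast_zmod_eq_zero_iff_dvd]
      simp [hz₀, hab]
    have := Int.le_of_dvd (by linarith) hdvd'
    linarith
  · have hdvd' : (p : ℤ) ∣ b - (z - a) := by
      rw [← ZMod.intCast_zmod_eq_zero_iff_dvd]
      simp [hz₀, hab]
    have := Int.le_of_dvd (by linarith) hdvd'
    linarith

lemma sub_one_mul_mooreBound (q d : ℕ) :
    ((q : ℤ) - 1) * mooreBound (q + 1) d = (q + 1) * q ^ d - 2 := by
  have hgeom := mul_geom_sum (q : ℤ) d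
  simp only [mooreBound, ← mul_sum, Nat.add_sub_cancel]
  push_cast
  linear_combination (q + 1) * hgeom

lemma card_mul_aeval_dickson_self_dvd (htrans : IsVertexTransitive G) {p r : ℕ} (hp : p.Prime)
    {v : V} (hv : aeval (G.adjMatrix ℤ) (dickson 1 (q : ℤ) r) v v = 0) :
    (p : ℤ) ∣ Fintype.card V * aeval (G.adjMatrix ℤ) (dickson 1 (q : ℤ) (r * p)) v v := by
  have htrace (P : ℤ[X]) :
      (aeval (G.adjMatrix ℤ) P).trace = Fintype.card V * aeval (G.adjMatrix ℤ) P v v := by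
    have hdiag (w : V) : aeval (G.adjMatrix ℤ) P w w = aeval (G.adjMatrix ℤ) P v v := by
      obtain ⟨φ, rfl⟩ := htrans v w
      exact aeval_adjMatrix_apply_iso φ P v v
    simp [trace, hdiag]
  have : Fact p.Prime := ⟨hp⟩
  rw [← ZMod.intCast_zmod_eq_zero_iff_dvd, ← htrace, trace_aeval_dickson_one_mul_prime, htrace, hv,
    mul_zero, Int.cast_zero, zero_pow hp.ne_zero]

end Core

section LowerBound

lemma intCast_succ_mul_pow_eq_or_eq_neg {p q d m : ℕ} (hp : p.Prime) (hq : 0 < q) (hqp : q < p)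
    (hd : 2 * d + 1 = (2 * m + 1) * p) :
    (((q + 1) * q ^ d : ℤ) : ZMod p) = ((q + 1) * q ^ m : ℤ) ∨
      (((q + 1) * q ^ d : ℤ) : ZMod p) = -((q + 1) * q ^ m : ℤ) := by
  have : Fact p.Prime := ⟨hp⟩
  have hq₀ : (q : ZMod p) ≠ 0 := by
    rw [Ne, ZMod.natCast_eq_zero_iff]
    exact Nat.not_dvd_of_pos_of_lt hq hqp
  push_cast
  rw [← mul_neg]
  exact (pow_eq_or_eq_neg_of_two_mul_add_one_eq hq₀ hd).imp (congrArg _) (congrArg _)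

variable {V : Type*} [Fintype V]

lemma sub_one_mul_card_sub (q d : ℕ) :
    ((q : ℤ) - 1) * Fintype.card V - (q + 1) * q ^ d =
      -(2 + (q - 1) * mooreDefect V (q + 1) d) := by
  rw [mooreDefect]
  linear_combination sub_one_mul_mooreBound q d

lemma pow_le_three_mul_mooreDefect_sq {G : SimpleGraph V} [DecidableRel G.Adj] {p q d m : ℕ}
    (hG : G.IsRegularOfDegree (q + 1)) (hconn : G.Connected) (htrans : IsVertexTransitive G)
    (hdist : ∀ v w, G.dist v w ≤ d) (hq : 2 ≤ q) (hp : p.Prime)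
    (hqp : 2 * (q + 1) * q ^ m < p) (hd : 2 * d + 1 = (2 * m + 1) * p) :
    (q : ℤ) ^ m ≤ 3 * mooreDefect V (q + 1) d ^ 2 := by
  classical
  by_contra! hdefect
  have hpow : 0 < q ^ m := by positivity
  have hpq : 2 * (q + 1) < p := by nlinarith
  obtain ⟨e, rfl⟩ : ∃ e, d = e + 1 := Nat.exists_eq_succ_of_ne_zero (by rintro rfl; nlinarith)
  have hme : m ≤ e - m := by
    have : 7 * (2 * m + 1) ≤ (2 * m + 1) * p := by nlinarith
    lia
  obtain ⟨v⟩ := hconn.nonempty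
  have hv (w : V) : 1 ≤ mooreMatrix G q (e + 1) v w :=
    one_le_mooreMatrix_of_dist_le hG hconn (hdist v w)
  set D := mooreDefect V (q + 1) (e + 1)
  have hD₀ : 0 ≤ D := mooreDefect_nonneg hG hv
  have hzero : aeval (G.adjMatrix ℤ) (dickson 1 (q : ℤ) (2 * m + 1)) v v = 0 := by
    refine aeval_dickson_self_eq_zero hG (by lia) hv (by lia) ?_
    calc D ^ 2 ≤ 3 * D ^ 2 := by linarith [sq_nonneg D]
      _ < (q : ℤ) ^ m := hdefect
      _ ≤ (q : ℤ) ^ (e - m) := pow_le_pow_right₀ (by lia) hme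
  have hdvd := card_mul_aeval_dickson_self_dvd htrans hp hzero
  rw [← hd] at hdvd
  have hcong := intCast_succ_mul_pow_eq_or_eq_neg (q := q) hp (by lia) (by lia) hd
  have hqp' : 2 * (((q : ℤ) + 1) * q ^ m) < p := by rw [← mul_assoc]; exact_mod_cast hqp
  rcases (Nat.prime_iff_prime_int.1 hp).dvd_or_dvd hdvd with hcard | hdiag
  · refine not_intCast_dvd_of_abs_sub_lt hcong hqp' ?_ (hcard.mul_left ((q : ℤ) - 1))
    rw [sub_one_mul_card_sub, abs_neg, abs_of_nonneg (by nlinarith)]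
    nlinarith [Int.le_self_sq D]
  · refine not_intCast_dvd_of_abs_sub_lt hcong hqp' ?_ hdiag
    refine (abs_aeval_dickson_self_sub_le hG (by lia) hv).trans_lt ?_
    nlinarith

end LowerBound

theorem stmt_1_general (k c r p d : ℕ) (hk : 3 ≤ k) (hr : Odd r) (hp : p.Prime)
    (h1 : 2 * k * (k - 1) ^ ((r - 1) / 2) < p) (h2 : 3 * c ^ 2 < (k - 1) ^ ((r - 1) / 2))
    (hd : 2 * d + 1 = r * p) (V : Type*) [Fintype V] (G : SimpleGraph V) [DecidableRel G.Adj]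
    (hconn : G.Connected) (htrans : IsVertexTransitive G)
    (hreg : G.IsRegularOfDegree k) (hdiam : G.diam = d) :
    (Fintype.card V : ℤ) < (mooreBound k d : ℤ) - c := by
  obtain ⟨q, rfl⟩ : ∃ q, k = q + 1 := ⟨k - 1, by lia⟩
  obtain ⟨m, rfl⟩ := hr
  rw [Nat.add_sub_cancel, Nat.add_sub_cancel, Nat.mul_div_cancel_left m two_pos] at h1 h2
  classical
  have := hconn.nonempty
  have hdist (v w : V) : G.dist v w ≤ d :=
    hdiam ▸ SimpleGraph.dist_le_diam (SimpleGraph.connected_iff_ediam_ne_top.1 hconn)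
  have hpow := pow_le_three_mul_mooreDefect_sq hreg hconn htrans hdist (by lia) hp h1 hd
  have hnonneg : 0 ≤ mooreDefect V (q + 1) d :=
    mooreDefect_nonneg hreg fun w =>
      one_le_mooreMatrix_of_dist_le hreg hconn (hdist (Classical.arbitrary V) w)
  have hdefect : (c : ℤ) < mooreDefect V (q + 1) d := by
    refine lt_of_pow_lt_pow_left₀ 2 hnonneg ?_
    zify at h2
    linarith
  rw [mooreDefect] at hdefect
  linarith

/-- Let `k ≥ 3`, `c ≥ 2`, `r` an odd positive integer, `p` a prime with
`p > 2k(k−1)^((r−1)/2) > 8k(k−1)²c²`.  If `2d+1 = rp` then every finite connected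
vertex-transitive `k`-regular graph of diameter `d` has order less than `M(k,d) − c`. -/
theorem stmt_1 (k c r p d : ℕ) (hk : 3 ≤ k) (hc : 2 ≤ c)
    (hr : Odd r) (hrpos : 0 < r) (hp : p.Prime)
    (h1 : 2 * k * (k - 1) ^ ((r - 1) / 2) < p)
    (h2 : 8 * k * (k - 1) ^ 2 * c ^ 2 < 2 * k * (k - 1) ^ ((r - 1) / 2))
    (hd : 2 * d + 1 = r * p)
    (V : Type*) [Fintype V] (G : SimpleGraph V) [DecidableRel G.Adj]
    (hconn : G.Connected) (htrans : IsVertexTransitive G)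
    (hreg : G.IsRegularOfDegree k) (hdiam : G.diam = d) :
    (Fintype.card V : ℤ) < (mooreBound k d : ℤ) - c := by
  have hpow : 8 * k * c ^ 2 ≤ 8 * k * c ^ 2 * (k - 1) ^ 2 :=
    Nat.le_mul_of_pos_right _ (pow_pos (by lia) 2)
  have hck : 3 * c ^ 2 < (k - 1) ^ ((r - 1) / 2) := by
    refine Nat.lt_of_mul_lt_mul_left (a := 2 * k) (lt_of_le_of_lt ?_ h2)
    linarith [Nat.zero_le (k * c ^ 2)]
  exact stmt_1_general k c r p d hk hr hp h1 hck hd V G hconn htrans hreg hdiam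
end

section
/- (Alon–Boppana) Let k ≥ 3 be an integer. For every real ε > 0 there exists N such that every finite connected k-regular simple graph on n > N vertices has a real eigenvalue λ of its adjacency matrix with λ ≠ k and |λ| ≥ 2√(k−1) − ε. Equivalently, the liminf over n of the second largest absolute value of an adjacency eigenvalue of k-regular graphs on n vertices is at least 2√(k−1). -/
/-! Fix `c < 2√(k - 1)`. The radial eigenfunction of the `k`-regular tree with eigenvalue `c`
decreases until its first nonpositive value, so cutting it off there gives a finitely supported
radial function `f ≥ 0` on the tree with `A f ≥ c f`. Because `f` decreases with the distance to
the root, the inequality survives when `f` is composed with the distance to a vertex of any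
connected `k`-regular graph: identifying vertices only brings neighbours closer to the root. A
large graph contains two vertices so far apart that the resulting functions have disjoint,
nonadjacent supports. They span a plane on which the Rayleigh quotient is at least `c`; this plane
meets the orthogonal complement of the constants, which are the eigenspace of `k`. -/

open Finset Matrix Module.End
open scoped InnerProductSpace

section Spectral

variable {𝕜 E : Type*} [RCLike 𝕜] [NormedAddCommGroup E] [InnerProductSpace 𝕜 E]

theorem exists_hasEigenvalue_ge [FiniteDimensional 𝕜 E] {T : E →ₗ[𝕜] E} (hT : T.IsSymmetric)
    {c : ℝ} {x : E} (hx : x ≠ 0) (hc : c * ‖x‖ ^ 2 ≤ RCLike.re ⟪T x, x⟫_𝕜) :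
    ∃ μ : ℝ, c ≤ μ ∧ HasEigenvalue T (μ : 𝕜) := by
  have : Nontrivial E := ⟨x, 0, hx⟩
  refine ⟨_, ?_, hT.hasEigenvalue_iSup_of_finiteDimensional⟩
  have bddAbove : BddAbove (Set.range fun y : {y : E // y ≠ 0} ↦
      RCLike.re ⟪T y, y⟫_𝕜 / ‖(y : E)‖ ^ 2) :=
    ⟨‖T.toContinuousLinearMap‖, by
      rintro _ ⟨y, rfl⟩
      exact (le_abs_self _).trans (T.toContinuousLinearMap.rayleighQuotient_le_norm y)⟩
  calc c ≤ RCLike.re ⟪T x, x⟫_𝕜 / ‖x‖ ^ 2 := (le_div_iff₀ (by positivity)).2 hc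
    _ ≤ _ := le_ciSup bddAbove ⟨x, hx⟩

theorem exists_hasEigenvalue_ne_ge_of_mem_eigenspace_orthogonal [FiniteDimensional 𝕜 E]
    {T : E →ₗ[𝕜] E} (hT : T.IsSymmetric) {κ : 𝕜} {c : ℝ} {x : E} (hx : x ≠ 0)
    (hxκ : x ∈ (eigenspace T κ)ᗮ) (hc : c * ‖x‖ ^ 2 ≤ RCLike.re ⟪T x, x⟫_𝕜) :
    ∃ μ : ℝ, (μ : 𝕜) ≠ κ ∧ c ≤ μ ∧ HasEigenvalue T (μ : 𝕜) := by
  have invariant := hT.invariant_orthogonalComplement_eigenspace κ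
  obtain ⟨μ, hcμ, hμ⟩ := exists_hasEigenvalue_ge (hT.restrict_invariant invariant)
    (x := ⟨x, hxκ⟩) (by simpa [Subtype.ext_iff] using hx) hc
  obtain ⟨w, hw⟩ := hμ.exists_hasEigenvector
  have hw0 : (w : E) ≠ 0 := by simpa using hw.2
  have hTw : T w = (μ : 𝕜) • (w : E) := congrArg Subtype.val hw.apply_eq_smul
  refine ⟨μ, ?_, hcμ, hasEigenvalue_of_hasEigenvector ⟨mem_eigenspace_iff.2 hTw, hw0⟩⟩
  rintro rfl
  exact hw0 <| inner_self_eq_zero.1 <|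
    Submodule.inner_right_of_mem_orthogonal (mem_eigenspace_iff.2 hTw) w.2

theorem le_re_inner_map_add_of_inner_eq_zero {T : E →ₗ[𝕜] E} (hT : T.IsSymmetric) {c : ℝ}
    {x y : E} (hxy : ⟪x, y⟫_𝕜 = 0) (hTxy : ⟪T x, y⟫_𝕜 = 0)
    (hx : c * ‖x‖ ^ 2 ≤ RCLike.re ⟪T x, x⟫_𝕜) (hy : c * ‖y‖ ^ 2 ≤ RCLike.re ⟪T y, y⟫_𝕜) :
    c * ‖x + y‖ ^ 2 ≤ RCLike.re ⟪T (x + y), x + y⟫_𝕜 := by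
  have hTyx : ⟪T y, x⟫_𝕜 = 0 := by rw [hT, inner_eq_zero_symm, hTxy]
  have norm_add : ‖x + y‖ ^ 2 = ‖x‖ ^ 2 + ‖y‖ ^ 2 := by
    simpa only [sq] using norm_add_sq_eq_norm_sq_add_norm_sq_of_inner_eq_zero x y hxy
  simp only [norm_add, map_add, inner_add_left, inner_add_right, hTxy, hTyx, map_zero]
  linarith

theorem le_re_inner_map_smul {T : E →ₗ[𝕜] E} {c : ℝ} {x : E} (a : 𝕜)
    (hx : c * ‖x‖ ^ 2 ≤ RCLike.re ⟪T x, x⟫_𝕜) :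
    c * ‖a • x‖ ^ 2 ≤ RCLike.re ⟪T (a • x), a • x⟫_𝕜 := by
  have inner_smul : RCLike.re ⟪T (a • x), a • x⟫_𝕜 = ‖a‖ ^ 2 * RCLike.re ⟪T x, x⟫_𝕜 := by
    rw [map_smul, inner_smul_left, inner_smul_right, ← mul_assoc, RCLike.conj_mul,
      ← RCLike.ofReal_pow, RCLike.re_ofReal_mul]
  rw [inner_smul, norm_smul, mul_pow, mul_left_comm]
  gcongr

theorem exists_hasEigenvalue_ne_ge_of_eigenspace_le_span [FiniteDimensional 𝕜 E]
    {T : E →ₗ[𝕜] E} (hT : T.IsSymmetric) {κ : 𝕜} {z : E}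
    (hz : eigenspace T κ ≤ Submodule.span 𝕜 {z}) {c : ℝ} {x y : E} (hx0 : x ≠ 0) (hy0 : y ≠ 0)
    (hxy : ⟪x, y⟫_𝕜 = 0) (hTxy : ⟪T x, y⟫_𝕜 = 0)
    (hx : c * ‖x‖ ^ 2 ≤ RCLike.re ⟪T x, x⟫_𝕜) (hy : c * ‖y‖ ^ 2 ≤ RCLike.re ⟪T y, y⟫_𝕜) :
    ∃ μ : ℝ, (μ : 𝕜) ≠ κ ∧ c ≤ μ ∧ HasEigenvalue T (μ : 𝕜) := by
  have mem_orthogonal {w : E} (hw : ⟪z, w⟫_𝕜 = 0) : w ∈ (eigenspace T κ)ᗮ :=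
    Submodule.orthogonal_le hz (Submodule.mem_orthogonal_singleton_iff_inner_right.2 hw)
  by_cases hzx : ⟪z, x⟫_𝕜 = 0
  · exact exists_hasEigenvalue_ne_ge_of_mem_eigenspace_orthogonal hT hx0 (mem_orthogonal hzx) hx
  let w := ⟪z, y⟫_𝕜 • x + (-⟪z, x⟫_𝕜) • y
  have inner_w : ⟪y, w⟫_𝕜 = -⟪z, x⟫_𝕜 * ⟪y, y⟫_𝕜 := by
    simp [w, inner_add_right, inner_smul_right, inner_eq_zero_symm.1 hxy]
  have hw0 : w ≠ 0 := by
    intro hw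
    rw [hw, inner_zero_right] at inner_w
    simp [hzx, hy0] at inner_w
  refine exists_hasEigenvalue_ne_ge_of_mem_eigenspace_orthogonal hT hw0 (mem_orthogonal ?_) ?_
  · simp only [w, inner_add_right, inner_smul_right]
    ring
  · exact le_re_inner_map_add_of_inner_eq_zero hT (by simp [inner_smul_left, inner_smul_right, hxy])
      (by simp [inner_smul_left, inner_smul_right, hTxy]) (le_re_inner_map_smul _ hx)
      (le_re_inner_map_smul _ hy)

end Spectral

section RegularTree

/-- The radial eigenfunction, normalised to be `1` at the root, of the adjacency operator of the
`(q + 1)`-regular tree for the eigenvalue `c`, as a function of the distance to the root. -/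
noncomputable def sphericalFunction (q c : ℝ) : ℕ → ℝ
  | 0 => 1
  | 1 => c / (q + 1)
  | n + 2 => (c * sphericalFunction q c (n + 1) - sphericalFunction q c n) / q

/-- `p` is the profile of a radial test function on the `(q + 1)`-regular tree: as a function of
the distance to the root it is decreasing, supported in `[0, r)`, nonzero, and `A f ≥ c f` holds
for the corresponding function `f` and the adjacency operator `A` of the tree. -/
structure IsRadialSubsolution (q c : ℝ) (r : ℕ) (p : ℕ → ℝ) : Prop where
  antitone : Antitone p
  zero_pos : 0 < p 0
  eq_zero_of_le : ∀ i, r ≤ i → p i = 0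
  root_le : c * p 0 ≤ (q + 1) * p 1
  step_le : ∀ i, c * p (i + 1) ≤ p i + q * p (i + 2)

theorem IsRadialSubsolution.nonneg {q c : ℝ} {r : ℕ} {p : ℕ → ℝ}
    (hp : IsRadialSubsolution q c r p) (i : ℕ) : 0 ≤ p i :=
  (hp.eq_zero_of_le _ (le_max_right i r)).symm.le.trans (hp.antitone (le_max_left i r))

variable {q c : ℝ}

-- For a positive solution the ratios of consecutive terms would decrease by a fixed amount at
-- every step, because `q ρ + 1 / ρ ≥ 2√q > c`.
theorem exists_nonpos_of_recurrence {a : ℕ → ℝ} (hq : 0 < q) (hc : c < 2 * √q)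
    (ha : ∀ n, c * a (n + 1) = a n + q * a (n + 2)) : ∃ n, a n ≤ 0 := by
  by_contra! a_pos
  let ρ : ℕ → ℝ := fun n ↦ a (n + 1) / a n
  let δ := (2 * √q - c) / q
  have δ_pos : 0 < δ := div_pos (by linarith) hq
  have ρ_pos (n : ℕ) : 0 < ρ n := div_pos (a_pos _) (a_pos _)
  have recurrence (n : ℕ) : c = 1 / ρ n + q * ρ (n + 1) := by
    have := (a_pos n).ne'
    have := (a_pos (n + 1)).ne'
    simp only [ρ]
    field_simp
    linarith [ha n]
  have amgm (n : ℕ) : 2 * √q ≤ q * ρ n + 1 / ρ n := by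
    have := ρ_pos n
    have : q * ρ n + 1 / ρ n - 2 * √q = (√q * ρ n - 1) ^ 2 / ρ n := by
      field_simp
      rw [sub_sq, mul_pow, Real.sq_sqrt hq.le]
      ring
    linarith [show 0 ≤ (√q * ρ n - 1) ^ 2 / ρ n by positivity]
  have ρ_succ_le (n : ℕ) : ρ (n + 1) ≤ ρ n - δ := by
    have : q * δ = 2 * √q - c := mul_div_cancel₀ _ hq.ne'
    refine le_of_mul_le_mul_left ?_ hq
    linarith [recurrence n, amgm n]
  have ρ_le (n : ℕ) : ρ n ≤ ρ 0 - n * δ := by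
    induction n with
    | zero => simp
    | succ n ih => push_cast; linarith [ρ_succ_le n]
  obtain ⟨n, hn⟩ := exists_nat_ge (ρ 0 / δ)
  have : ρ 0 ≤ n * δ := (div_le_iff₀ δ_pos).1 hn
  linarith [ρ_le n, ρ_pos n]

theorem sphericalFunction_recurrence (hq : q ≠ 0) (n : ℕ) :
    c * sphericalFunction q c (n + 1) =
      sphericalFunction q c n + q * sphericalFunction q c (n + 2) := by
  rw [sphericalFunction, mul_div_cancel₀ _ hq]
  ring

theorem sphericalFunction_succ_le (hq : 0 < q) (hc : c ≤ q + 1) {n : ℕ}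
    (hn : ∀ i ≤ n, 0 ≤ sphericalFunction q c i) :
    sphericalFunction q c (n + 1) ≤ sphericalFunction q c n := by
  induction n with
  | zero =>
    simp only [sphericalFunction]
    exact (div_le_one (by linarith)).2 hc
  | succ n ih =>
    have ih := ih fun i hi ↦ hn i (by lia)
    have := mul_le_mul_of_nonneg_right hc (hn (n + 1) le_rfl)
    refine le_of_mul_le_mul_left ?_ hq
    linarith [sphericalFunction_recurrence (c := c) hq.ne' n]

theorem isRadialSubsolution_truncated_sphericalFunction (hq : 0 < q) (hc : c ≤ q + 1) {r : ℕ}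
    (hpos : ∀ i < r, 0 < sphericalFunction q c i) (hr : sphericalFunction q c r ≤ 0) :
    IsRadialSubsolution q c r fun i ↦ if i < r then sphericalFunction q c i else 0 := by
  let φ := sphericalFunction q c
  have φ_zero : φ 0 = 1 := rfl
  have r_pos : 0 < r := Nat.pos_of_ne_zero fun h ↦ by
    rw [h, sphericalFunction] at hr
    linarith
  let p : ℕ → ℝ := fun i ↦ if i < r then φ i else 0
  have p_of_lt {i : ℕ} (hi : i < r) : p i = φ i := if_pos hi
  have p_of_le {i : ℕ} (hi : r ≤ i) : p i = 0 := if_neg hi.not_gt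
  have p_nonneg (i : ℕ) : 0 ≤ p i := by
    obtain hi | hi := lt_or_ge i r
    · exact p_of_lt hi ▸ (hpos i hi).le
    · exact (p_of_le hi).ge
  have φ_le_p {i : ℕ} (hi : i ≤ r) : φ i ≤ p i := by
    obtain hi | rfl := hi.lt_or_eq
    · exact (p_of_lt hi).ge
    · exact hr.trans (p_nonneg i)
  change IsRadialSubsolution q c r p
  refine ⟨antitone_nat_of_succ_le fun i ↦ ?_, ?_, fun i ↦ p_of_le, ?_, fun i ↦ ?_⟩
  · obtain hi | hi := lt_or_ge (i + 1) r
    · rw [p_of_lt hi, p_of_lt (i.lt_succ_self.trans hi)]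
      exact sphericalFunction_succ_le hq hc fun j hj ↦ (hpos j (by lia)).le
    · rw [p_of_le hi]
      exact p_nonneg i
  · rw [p_of_lt r_pos]
    exact hpos 0 r_pos
  · calc c * p 0 = (q + 1) * φ 1 := by
          rw [p_of_lt r_pos, φ_zero, mul_one]
          exact (mul_div_cancel₀ _ (by linarith)).symm
      _ ≤ (q + 1) * p 1 := by gcongr; exact φ_le_p r_pos
  · obtain hi | hi := lt_or_ge (i + 1) r
    · calc c * p (i + 1) = φ i + q * φ (i + 2) := by
            rw [p_of_lt hi]
            exact sphericalFunction_recurrence hq.ne' i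
        _ ≤ p i + q * p (i + 2) := by gcongr <;> exact φ_le_p (by lia)
    · rw [p_of_le hi, mul_zero]
      have := p_nonneg i
      have := p_nonneg (i + 2)
      positivity

theorem exists_isRadialSubsolution (hq : 0 < q) (hc : c < 2 * √q) :
    ∃ r p, IsRadialSubsolution q c r p := by
  classical
  have exists_nonpos := exists_nonpos_of_recurrence hq hc (sphericalFunction_recurrence hq.ne')
  have c_le : c ≤ q + 1 := by nlinarith [sq_nonneg (√q - 1), Real.sq_sqrt hq.le]
  exact ⟨Nat.find exists_nonpos, _, isRadialSubsolution_truncated_sphericalFunction hq c_le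
    (fun i hi ↦ not_le.1 (Nat.find_min exists_nonpos hi)) (Nat.find_spec exists_nonpos)⟩

end RegularTree

section Graph

variable {V : Type*} {G : SimpleGraph V}

theorem exists_adj_dist_add_one_eq (hG : G.Connected) {u x : V} (hxu : x ≠ u) :
    ∃ y, G.Adj x y ∧ G.dist u y + 1 = G.dist u x := by
  obtain ⟨walk, hwalk⟩ := hG.exists_walk_length_eq_dist x u
  cases walk with
  | nil => exact absurd rfl hxu
  | @cons _ y _ hxy tail =>
    have tail_ge := G.dist_le tail
    have triangle := hG.dist_triangle (u := x) (v := y) (w := u)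
    rw [SimpleGraph.dist_eq_one_iff_adj.2 hxy] at triangle
    rw [SimpleGraph.Walk.length_cons] at hwalk
    exact ⟨y, hxy, by rw [G.dist_comm (u := u), G.dist_comm (u := u)]; lia⟩

theorem dist_le_dist_add_one_of_adj (hG : G.Connected) (u : V) {x y : V} (hxy : G.Adj x y) :
    G.dist u y ≤ G.dist u x + 1 :=
  SimpleGraph.dist_eq_one_iff_adj.2 hxy ▸ hG.dist_triangle

variable [Fintype V] [DecidableRel G.Adj]

theorem card_dist_le_le_pow (hG : G.Connected) {d : ℕ} (hd : ∀ x, G.degree x ≤ d) (u : V)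
    (r : ℕ) : #{x | G.dist u x ≤ r} ≤ (d + 1) ^ r := by
  classical
  induction r with
  | zero => simp [hG.dist_eq_zero_iff, filter_eq]
  | succ r ih =>
    have subset_biUnion : ({x | G.dist u x ≤ r + 1} : Finset V) ⊆
        ({x | G.dist u x ≤ r} : Finset V).biUnion fun x ↦ insert x (G.neighborFinset x) := by
      intro x hx
      simp only [mem_filter_univ, mem_biUnion, mem_insert, SimpleGraph.mem_neighborFinset] at hx ⊢
      by_cases hxr : G.dist u x ≤ r
      · exact ⟨x, hxr, .inl rfl⟩
      have hxu : x ≠ u := by rintro rfl; simp at hxr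
      obtain ⟨y, hxy, hy⟩ := exists_adj_dist_add_one_eq hG hxu
      exact ⟨y, by lia, .inr hxy.symm⟩
    calc #{x | G.dist u x ≤ r + 1} ≤ #{x | G.dist u x ≤ r} * (d + 1) :=
          (card_le_card subset_biUnion).trans <| card_biUnion_le_card_mul _ _ _ fun x _ ↦
            (card_insert_le _ _).trans (Nat.succ_le_succ (hd x))
      _ ≤ (d + 1) ^ (r + 1) := by rw [pow_succ]; gcongr

theorem exists_lt_dist_of_pow_lt_card (hG : G.Connected) {d r : ℕ} (hd : ∀ x, G.degree x ≤ d)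
    (hcard : (d + 1) ^ r < Fintype.card V) (u : V) : ∃ v, r < G.dist u v := by
  by_contra! hle
  have := card_dist_le_le_pow hG hd u r
  rw [filter_true_of_mem fun x _ ↦ hle x, card_univ] at this
  lia

theorem eigenspace_adjMatrix_le_span_one [DecidableEq V] {k : ℕ} (hG : G.Connected)
    (hreg : G.IsRegularOfDegree k) :
    eigenspace (toEuclideanLin (G.adjMatrix ℝ)) (k : ℝ) ≤ Submodule.span ℝ {WithLp.toLp 2 1} := by
  intro w hw
  have adj_w : G.adjMatrix ℝ *ᵥ w.ofLp = (k : ℝ) • w.ofLp :=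
    congrArg WithLp.ofLp (mem_eigenspace_iff.1 hw)
  have lap_w : G.lapMatrix ℝ *ᵥ w.ofLp = 0 := by
    ext x
    have := congrFun adj_w x
    rw [G.adjMatrix_mulVec_apply] at this
    simp [G.lapMatrix_mulVec_apply, this, hreg x]
  rw [G.lapMatrix_mulVec_eq_zero_iff_forall_reachable] at lap_w
  obtain ⟨u⟩ := hG.nonempty
  refine Submodule.mem_span_singleton.2 ⟨w u, ?_⟩
  ext x
  simp [lap_w u x (hG.preconnected u x)]

theorem exists_eigenvalue_ne_ge_of_dotProduct_eq_zero {k : ℕ} (hG : G.Connected)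
    (hreg : G.IsRegularOfDegree k) {c : ℝ} {f g : V → ℝ} (hf0 : f ≠ 0) (hg0 : g ≠ 0)
    (hfg : f ⬝ᵥ g = 0) (hAfg : (G.adjMatrix ℝ *ᵥ f) ⬝ᵥ g = 0)
    (hf : c * (f ⬝ᵥ f) ≤ (G.adjMatrix ℝ *ᵥ f) ⬝ᵥ f)
    (hg : c * (g ⬝ᵥ g) ≤ (G.adjMatrix ℝ *ᵥ g) ⬝ᵥ g) :
    ∃ μ : ℝ, μ ≠ k ∧ (∃ v : V → ℝ, v ≠ 0 ∧ G.adjMatrix ℝ *ᵥ v = μ • v) ∧ c ≤ μ := by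
  classical
  have inner_toLp (a b : V → ℝ) : inner ℝ (WithLp.toLp 2 a) (WithLp.toLp 2 b) = a ⬝ᵥ b := by
    rw [EuclideanSpace.inner_toLp_toLp, star_trivial, dotProduct_comm]
  obtain ⟨μ, hμk, hcμ, hμ⟩ := exists_hasEigenvalue_ne_ge_of_eigenspace_le_span
    (isSymmetric_toEuclideanLin_iff.2 (G.isHermitian_adjMatrix ℝ))
    (eigenspace_adjMatrix_le_span_one hG hreg) (c := c)
    (x := WithLp.toLp 2 f) (y := WithLp.toLp 2 g) (by simpa using hf0) (by simpa using hg0)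
    (by rwa [inner_toLp]) (by rwa [toLpLin_toLp, inner_toLp])
    (by rwa [toLpLin_toLp, inner_toLp, ← real_inner_self_eq_norm_sq, inner_toLp])
    (by rwa [toLpLin_toLp, inner_toLp, ← real_inner_self_eq_norm_sq, inner_toLp])
  obtain ⟨v, hv⟩ := hμ.exists_hasEigenvector
  exact ⟨μ, hμk, ⟨v.ofLp, by simpa using hv.2, congrArg WithLp.ofLp hv.apply_eq_smul⟩, hcμ⟩

variable {q c : ℝ} {r : ℕ} {p : ℕ → ℝ} {k : ℕ}

theorem IsRadialSubsolution.mul_le_adjMatrix_mulVec (hp : IsRadialSubsolution q c r p)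
    (hG : G.Connected) (hreg : G.IsRegularOfDegree k) (hk : (k : ℝ) = q + 1) (u x : V) :
    c * p (G.dist u x) ≤ (G.adjMatrix ℝ *ᵥ fun y ↦ p (G.dist u y)) x := by
  classical
  have le_neighbor {y : V} (hy : y ∈ G.neighborFinset x) :
      p (G.dist u x + 1) ≤ p (G.dist u y) :=
    hp.antitone (dist_le_dist_add_one_of_adj hG u (by simpa using hy))
  rw [G.adjMatrix_mulVec_apply]
  obtain rfl | hxu := eq_or_ne x u
  · have := card_nsmul_le_sum _ _ _ fun y hy ↦ le_neighbor hy
    rw [G.card_neighborFinset_eq_degree, hreg x, nsmul_eq_mul, hk, G.dist_self] at this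
    simpa using hp.root_le.trans this
  · obtain ⟨parent, adj_parent, dist_parent⟩ := exists_adj_dist_add_one_eq hG hxu
    have parent_mem : parent ∈ G.neighborFinset x := by simpa using adj_parent
    have card_others : (#((G.neighborFinset x).erase parent) : ℝ) = q := by
      have := card_erase_add_one parent_mem
      rw [G.card_neighborFinset_eq_degree, hreg x] at this
      have : (#((G.neighborFinset x).erase parent) : ℝ) + 1 = k := by exact_mod_cast this
      linarith
    have others := card_nsmul_le_sum _ _ _ fun y (hy : y ∈ (G.neighborFinset x).erase parent) ↦
      le_neighbor (mem_of_mem_erase hy)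
    rw [nsmul_eq_mul, card_others, ← dist_parent] at others
    rw [← add_sum_erase _ _ parent_mem, ← dist_parent]
    linarith [hp.step_le (G.dist u parent)]

theorem IsRadialSubsolution.mul_dotProduct_le (hp : IsRadialSubsolution q c r p)
    (hG : G.Connected) (hreg : G.IsRegularOfDegree k) (hk : (k : ℝ) = q + 1) (u : V) :
    c * ((fun x ↦ p (G.dist u x)) ⬝ᵥ fun x ↦ p (G.dist u x)) ≤
      (G.adjMatrix ℝ *ᵥ fun x ↦ p (G.dist u x)) ⬝ᵥ fun x ↦ p (G.dist u x) := by
  rw [dotProduct, mul_sum]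
  refine sum_le_sum fun x _ ↦ ?_
  rw [← mul_assoc]
  exact mul_le_mul_of_nonneg_right (hp.mul_le_adjMatrix_mulVec hG hreg hk u x) (hp.nonneg _)

theorem IsRadialSubsolution.exists_eigenvalue_ne_ge (hp : IsRadialSubsolution q c r p)
    (hG : G.Connected) (hreg : G.IsRegularOfDegree k) (hk : (k : ℝ) = q + 1) {u v : V}
    (huv : 2 * r ≤ G.dist u v) :
    ∃ μ : ℝ, μ ≠ k ∧ (∃ w : V → ℝ, w ≠ 0 ∧ G.adjMatrix ℝ *ᵥ w = μ • w) ∧ c ≤ μ := by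
  have radial_ne_zero (z : V) : (fun x ↦ p (G.dist z x)) ≠ 0 := by
    intro h
    have := congrFun h z
    simp only [G.dist_self, Pi.zero_apply] at this
    exact hp.zero_pos.ne' this
  have mul_eq_zero_of_dist_le_one {x y : V} (hxy : G.dist y x ≤ 1) :
      p (G.dist u y) * p (G.dist v x) = 0 := by
    by_contra h
    obtain ⟨hy, hx⟩ := mul_ne_zero_iff.1 h
    have := not_le.1 fun hry ↦ hy (hp.eq_zero_of_le _ hry)
    have := not_le.1 fun hrx ↦ hx (hp.eq_zero_of_le _ hrx)
    have := hG.dist_triangle (u := u) (v := y) (w := v)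
    have := hG.dist_triangle (u := y) (v := x) (w := v)
    rw [G.dist_comm (u := x)] at this
    lia
  refine exists_eigenvalue_ne_ge_of_dotProduct_eq_zero hG hreg (radial_ne_zero u)
    (radial_ne_zero v) ?_ ?_ (hp.mul_dotProduct_le hG hreg hk u) (hp.mul_dotProduct_le hG hreg hk v)
  · exact sum_eq_zero fun x _ ↦ mul_eq_zero_of_dist_le_one (by simp)
  · refine sum_eq_zero fun x _ ↦ ?_
    rw [G.adjMatrix_mulVec_apply, sum_mul]
    refine sum_eq_zero fun y hy ↦ mul_eq_zero_of_dist_le_one ?_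
    exact (SimpleGraph.dist_eq_one_iff_adj.2 (by simpa using hy : G.Adj x y).symm).le

end Graph

theorem stmt_2_general (k : ℕ) (hk : 2 ≤ k) (ε : ℝ) (hε : 0 < ε) :
    ∃ N : ℕ, ∀ (V : Type*) [Fintype V] (G : SimpleGraph V) [DecidableRel G.Adj],
      G.Connected → G.IsRegularOfDegree k → N < Fintype.card V →
        ∃ lam : ℝ, lam ≠ (k : ℝ) ∧
          (∃ v : V → ℝ, v ≠ 0 ∧ Matrix.mulVec (SimpleGraph.adjMatrix ℝ G) v = lam • v) ∧
          2 * Real.sqrt (k - 1) - ε ≤ lam := by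
  have q_pos : (0 : ℝ) < k - 1 := by
    have : (2 : ℝ) ≤ k := by exact_mod_cast hk
    linarith
  obtain ⟨r, p, hp⟩ := exists_isRadialSubsolution q_pos (sub_lt_self (2 * √((k : ℝ) - 1)) hε)
  refine ⟨(k + 1) ^ (2 * r), fun V _ G _ hG hreg hcard ↦ ?_⟩
  obtain ⟨u⟩ := hG.nonempty
  obtain ⟨v, huv⟩ := exists_lt_dist_of_pow_lt_card hG (fun x ↦ (hreg x).le) hcard u
  exact hp.exists_eigenvalue_ne_ge hG hreg (by ring) huv.le

/-- (Alon–Boppana) For `k ≥ 3` and every `ε > 0` there is `N` such that every finite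
connected `k`-regular simple graph on more than `N` vertices has an adjacency eigenvalue
`λ ≠ k` with `|λ| ≥ 2√(k−1) − ε`. -/
theorem stmt_2 (k : ℕ) (hk : 3 ≤ k) (ε : ℝ) (hε : 0 < ε) :
    ∃ N : ℕ, ∀ (V : Type) [Fintype V] (G : SimpleGraph V) [DecidableRel G.Adj],
      G.Connected → G.IsRegularOfDegree k → N < Fintype.card V →
        ∃ lam : ℝ, lam ≠ (k : ℝ) ∧
          (∃ v : V → ℝ, v ≠ 0 ∧ Matrix.mulVec (SimpleGraph.adjMatrix ℝ G) v = lam • v) ∧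
          2 * Real.sqrt (k - 1) - ε ≤ |lam| := by
  obtain ⟨N, hN⟩ := stmt_2_general k (by lia) ε hε
  refine ⟨N, fun V _ G _ hG hreg hcard ↦ ?_⟩
  obtain ⟨lam, hne, hv, hle⟩ := hN V G hG hreg hcard
  exact ⟨lam, hne, hv, hle.trans (le_abs_self lam)⟩
end

section
/- Let k ≥ 3 and d ≥ 1 be integers. Every finite connected simple graph Γ of maximum degree at most k and diameter at most d that contains at least one vertex of degree strictly less than k satisfies |V(Γ)| ≤ M(k,d) − ((k−1)^d − 1)/(k−2). -/
/-!
Count vertices by their distance from a vertex `c` of degree less than `k`. A vertex at positive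
distance from `c` has a neighbour closer to `c`, hence at most `k - 1` neighbours farther away, so
there are at most `deg c * (k - 1) ^ i` vertices at distance `i + 1`. Replacing `k` by
`deg c ≤ k - 1` for the root in the Moore count saves at least
`∑ i < d, (k - 1) ^ i = ((k - 1) ^ d - 1) / (k - 2)`.
-/

theorem encard_biUnion_le_encard_mul {ι α : Type*} {s : Set ι} {t : ι → Set α} {b : ℕ∞}
    (hs : s.Finite) (ht : ∀ i ∈ s, (t i).encard ≤ b) :
    (⋃ i ∈ s, t i).encard ≤ s.encard * b := by
  lift s to Finset ι using hs
  calc (⋃ i ∈ s, t i).encard ≤ ∑ i ∈ s, (t i).encard := s.set_encard_biUnion_le t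
    _ ≤ s.card • b := Finset.sum_le_card_nsmul s _ b ht
    _ = (s : Set ι).encard * b := by rw [nsmul_eq_mul, Set.encard_coe_eq_coe_finsetCard]

section GraphSphere

variable {V : Type*} {G : SimpleGraph V} {c u w : V} {n q : ℕ}

/-- The sphere of radius `n` centred at `c` in the extended graph metric. As `n` is a natural
number, vertices in other components lie on no sphere. -/
def graphSphere (G : SimpleGraph V) (c : V) (n : ℕ) : Set V := {v | G.edist v c = n}

theorem graphSphere_zero : graphSphere G c 0 = {c} := by
  ext v
  simp [graphSphere]

theorem graphSphere_one : graphSphere G c 1 = G.neighborSet c := by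
  ext v
  simp [graphSphere, G.adj_comm]

theorem exists_adj_of_mem_graphSphere_succ (hu : u ∈ graphSphere G c (n + 1)) :
    ∃ w ∈ graphSphere G c n, G.Adj w u := by
  obtain ⟨p, hp⟩ := SimpleGraph.exists_walk_of_edist_eq_coe hu
  cases p with
  | nil => simp at hp
  | @cons _ w _ huw p =>
    have hpn : p.length = n := by simpa using hp
    have upper : G.edist w c ≤ n := hpn ▸ p.edist_le
    have lower : (n : ℕ∞) + 1 ≤ G.edist w c + 1 := calc
      (n : ℕ∞) + 1 = G.edist u c := by exact_mod_cast hu.symm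
      _ ≤ G.edist u w + G.edist w c := G.edist_triangle
      _ = G.edist w c + 1 := by rw [SimpleGraph.edist_eq_one_iff_adj.2 huw, add_comm]
    exact ⟨w, upper.antisymm ((ENat.add_le_add_iff_right ENat.one_ne_top).1 lower), huw.symm⟩

theorem encard_neighborSet_inter_graphSphere_le (hw : w ∈ graphSphere G c (n + 1))
    (hdeg : (G.neighborSet w).encard ≤ q + 1) :
    (G.neighborSet w ∩ graphSphere G c (n + 2)).encard ≤ q := by
  obtain ⟨x, hx, hxw⟩ := exists_adj_of_mem_graphSphere_succ hw
  have hx_notMem : x ∉ G.neighborSet w ∩ graphSphere G c (n + 2) := by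
    rintro ⟨-, hx'⟩
    have : n = n + 2 := by exact_mod_cast (hx : G.edist x c = n).symm.trans hx'
    omega
  have hsub : insert x (G.neighborSet w ∩ graphSphere G c (n + 2)) ⊆ G.neighborSet w :=
    Set.insert_subset hxw.symm Set.inter_subset_left
  rw [← ENat.add_le_add_iff_right ENat.one_ne_top, ← Set.encard_insert_of_notMem hx_notMem]
  exact (Set.encard_le_encard hsub).trans hdeg

theorem encard_graphSphere_succ_le (hdeg : ∀ v, (G.neighborSet v).encard ≤ q + 1) (n : ℕ) :
    (graphSphere G c (n + 1)).encard ≤ (G.neighborSet c).encard * q ^ n := by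
  induction n with
  | zero => simp [graphSphere_one]
  | succ n ih =>
    have hfin : (graphSphere G c (n + 1)).Finite := by
      refine Set.finite_of_encard_le_coe (k := (q + 1) * q ^ n) (ih.trans ?_)
      push_cast
      gcongr
      exact hdeg c
    have hcover : graphSphere G c (n + 2) ⊆
        ⋃ w ∈ graphSphere G c (n + 1), G.neighborSet w ∩ graphSphere G c (n + 2) := fun u hu ↦
      have ⟨w, hw, hwu⟩ := exists_adj_of_mem_graphSphere_succ hu
      Set.mem_biUnion hw ⟨hwu, hu⟩
    calc (graphSphere G c (n + 2)).encard
      _ ≤ (graphSphere G c (n + 1)).encard * q :=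
        (Set.encard_le_encard hcover).trans <| encard_biUnion_le_encard_mul hfin fun w hw ↦
          encard_neighborSet_inter_graphSphere_le hw (hdeg w)
      _ ≤ (G.neighborSet c).encard * q ^ n * q := by gcongr
      _ = (G.neighborSet c).encard * q ^ (n + 1) := by rw [pow_succ, mul_assoc]

theorem ball_eq_biUnion_graphSphere (d : ℕ) :
    G.ball c (d + 1) = ⋃ i ∈ Finset.range (d + 1), graphSphere G c i := by
  ext v
  simp only [SimpleGraph.mem_ball, graphSphere, Set.mem_iUnion, Finset.mem_range,
    Set.mem_ofPred_eq, exists_prop]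
  constructor
  · intro hv
    lift G.edist v c to ℕ using hv.ne_top with r
    exact ⟨r, by exact_mod_cast hv, rfl⟩
  · rintro ⟨i, hi, hv⟩
    rw [hv]
    exact_mod_cast hi

theorem encard_ball_le (hdeg : ∀ v, (G.neighborSet v).encard ≤ q + 1) (d : ℕ) :
    (G.ball c (d + 1)).encard ≤ 1 + (G.neighborSet c).encard * ∑ i ∈ Finset.range d, (q : ℕ∞) ^ i :=
  calc (G.ball c (d + 1)).encard
    _ ≤ ∑ i ∈ Finset.range (d + 1), (graphSphere G c i).encard := by
      rw [ball_eq_biUnion_graphSphere]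
      exact Finset.set_encard_biUnion_le _ _
    _ = 1 + ∑ i ∈ Finset.range d, (graphSphere G c (i + 1)).encard := by
      rw [Finset.sum_range_succ', graphSphere_zero, Set.encard_singleton, add_comm]
    _ ≤ 1 + (G.neighborSet c).encard * ∑ i ∈ Finset.range d, (q : ℕ∞) ^ i := by
      rw [Finset.mul_sum]
      gcongr
      exact encard_graphSphere_succ_le hdeg _

theorem ball_eq_univ_of_eccent_le {d : ℕ} (h : G.eccent c ≤ d) : G.ball c (d + 1) = Set.univ := by
  refine Set.eq_univ_of_forall fun v ↦ ?_
  rw [SimpleGraph.mem_ball, SimpleGraph.edist_comm, ENat.lt_natCast_add_one_iff]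
  exact (SimpleGraph.eccent_le_iff c d).1 h v

theorem encard_neighborSet_eq_degree (v : V) [Fintype (G.neighborSet v)] :
    (G.neighborSet v).encard = G.degree v := by
  rw [Set.encard_eq_coe_toFinset_card]
  rfl

theorem finite_and_natCard_le_of_eccent_le [G.LocallyFinite] {d : ℕ}
    (hdeg : ∀ v, G.degree v ≤ q + 1) (hc : G.eccent c ≤ d) :
    Finite V ∧ Nat.card V ≤ 1 + G.degree c * ∑ i ∈ Finset.range d, q ^ i := by
  have hball := encard_ball_le (G := G) (c := c) (q := q)
    (fun v ↦ by rw [encard_neighborSet_eq_degree]; exact_mod_cast hdeg v) d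
  rw [ball_eq_univ_of_eccent_le hc, encard_neighborSet_eq_degree] at hball
  rw [← Set.finite_univ_iff, ← Set.ncard_univ, ← Set.encard_le_coe_iff_finite_ncard_le]
  exact_mod_cast hball

end GraphSphere

theorem mooreBound_succ_sub_geom {q : ℕ} (hq : q ≠ 1) (d : ℕ) :
    (mooreBound (q + 1) d : ℚ) - ((q : ℚ) ^ d - 1) / (q - 1) =
      1 + q * ∑ i ∈ Finset.range d, (q : ℚ) ^ i := by
  rw [← geom_sum_eq (Nat.cast_ne_one.2 hq), mooreBound, ← Finset.mul_sum, Nat.add_sub_cancel]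
  push_cast
  ring

theorem stmt_3_general {V : Type*} (G : SimpleGraph V) [G.LocallyFinite] {k d : ℕ} {c : V}
    (hk : k ≠ 2) (hdeg : ∀ v, G.degree v ≤ k) (hc : G.degree c < k) (hecc : G.eccent c ≤ d) :
    Finite V ∧
      (Nat.card V : ℚ) ≤ mooreBound k d - (((k : ℚ) - 1) ^ d - 1) / ((k : ℚ) - 2) := by
  obtain ⟨q, rfl⟩ := Nat.exists_eq_succ_of_ne_zero (Nat.ne_zero_of_lt hc)
  obtain ⟨hfin, hcard⟩ := finite_and_natCard_le_of_eccent_le hdeg hecc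
  have hcard_le : Nat.card V ≤ 1 + q * ∑ i ∈ Finset.range d, q ^ i :=
    hcard.trans (by gcongr; exact Nat.le_of_lt_succ hc)
  have hpred : ((q + 1 : ℕ) : ℚ) - 1 = q := by push_cast; ring
  have hpred₂ : ((q + 1 : ℕ) : ℚ) - 2 = q - 1 := by push_cast; ring
  refine ⟨hfin, ?_⟩
  rw [hpred, hpred₂, mooreBound_succ_sub_geom (by omega)]
  exact_mod_cast hcard_le

/-- A connected graph of maximum degree at most `k`, diameter at most `d`, having a
vertex of degree strictly less than `k`, has order at most `M(k,d) − ((k−1)^d − 1)/(k−2)`. -/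
theorem stmt_3 (k d : ℕ) (hk : 3 ≤ k) (hd : 1 ≤ d)
    (V : Type*) [Fintype V] (G : SimpleGraph V) [DecidableRel G.Adj]
    (hconn : G.Connected) (hdeg : ∀ v : V, G.degree v ≤ k)
    (hdiam : ∀ u v : V, G.dist u v ≤ d)
    (hsmall : ∃ v : V, G.degree v < k) :
    (Fintype.card V : ℚ) ≤ (mooreBound k d : ℚ) - (((k : ℚ) - 1) ^ d - 1) / ((k : ℚ) - 2) := by
  obtain ⟨c, hc⟩ := hsmall
  have hecc : G.eccent c ≤ d := (G.eccent_le_iff c d).2 fun v ↦ by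
    rw [← (hconn c v).coe_dist_eq_edist]
    exact_mod_cast hdiam c v
  simpa using (stmt_3_general G (by omega) hdeg hc hecc).2
end

section
/- For all integers k ≥ 3 and d ≥ 0, G_{k,d}(2√(k−1)) = (d+1)·(√(k−1))^d + d·(√(k−1))^{d−1}. -/
/-- The polynomials `G_{k,i}(x)` defined by `G_{k,0}(x) = 1`, `G_{k,1}(x) = x + 1`,
`G_{k,i+1}(x) = x·G_{k,i}(x) − (k−1)·G_{k,i−1}(x)`. -/
def Gpol (k : ℕ) : ℕ → ℝ → ℝ
  | 0, _ => 1
  | 1, x => x + 1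
  | (i + 2), x => x * Gpol k (i + 1) x - (k - 1 : ℝ) * Gpol k i x

/-! If `s² = k - 1`, the substitution `x = 2sy` turns the recurrence for `G_{k,i}` into a rescaled
Chebyshev recurrence, with solution `G_{k,d}(2sy) = s^d U_d(y) + s^(d-1) U_{d-1}(y)`.
At `y = 1` the values `U_n(1) = n + 1` give the closed form. -/

section

open Polynomial

variable {k : ℕ} {s : ℝ}

theorem Gpol_succ_two_mul_eq_chebyshevU (hs : s ^ 2 = k - 1) (y : ℝ) (n : ℕ) :
    Gpol k (n + 1) (2 * s * y) =
      s ^ (n + 1) * (Chebyshev.U ℝ (n + 1)).eval y + s ^ n * (Chebyshev.U ℝ n).eval y := by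
  have eval_U_add_two (m : ℤ) : (Chebyshev.U ℝ (m + 2)).eval y =
      2 * y * (Chebyshev.U ℝ (m + 1)).eval y - (Chebyshev.U ℝ m).eval y := by
    simp [Chebyshev.U_add_two]
  have Gpol_add_two (i : ℕ) : Gpol k (i + 2) (2 * s * y) =
      2 * s * y * Gpol k (i + 1) (2 * s * y) - s ^ 2 * Gpol k i (2 * s * y) := by
    rw [Gpol, hs]
  induction n using Nat.twoStepInduction with
  | zero => simp [Gpol, mul_left_comm, mul_assoc]
  | one =>
    rw [Gpol_add_two, Gpol, Gpol, Nat.cast_one, show (1 : ℤ) + 1 = 2 from rfl, Chebyshev.U_two]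
    simp only [Chebyshev.U_one, eval_sub, eval_mul, eval_pow, eval_ofNat, eval_X, eval_one]
    ring
  | more n ih ih_succ =>
    have eval_U_add_three : (Chebyshev.U ℝ (n + 3)).eval y =
        2 * y * (Chebyshev.U ℝ (n + 2)).eval y - (Chebyshev.U ℝ (n + 1)).eval y := by
      simpa only [add_assoc, Int.reduceAdd] using eval_U_add_two (n + 1)
    rw [Gpol_add_two, ih_succ, ih]
    push_cast
    simp only [add_assoc, Int.reduceAdd]
    linear_combination -s ^ (n + 3) * eval_U_add_three - s ^ (n + 2) * eval_U_add_two n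

theorem stmt_10_general (hs : s ^ 2 = k - 1) (d : ℕ) :
    Gpol k d (2 * s) = (d + 1) * s ^ d + d * s ^ (d - 1) := by
  cases d with
  | zero => simp [Gpol]
  | succ n =>
    have chebyshev_at_one := Gpol_succ_two_mul_eq_chebyshevU hs 1 n
    simp only [mul_one, Chebyshev.U_eval_one] at chebyshev_at_one
    rw [chebyshev_at_one, Nat.add_sub_cancel]
    push_cast
    ring

end

/-- `G_{k,d}(2√(k−1)) = (d+1)(√(k−1))^d + d(√(k−1))^{d−1}`. -/
theorem stmt_10 (k d : ℕ) (hk : 3 ≤ k) :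
    Gpol k d (2 * Real.sqrt ((k : ℝ) - 1))
      = (d + 1 : ℝ) * (Real.sqrt ((k : ℝ) - 1)) ^ d
        + (d : ℝ) * (Real.sqrt ((k : ℝ) - 1)) ^ (d - 1) := by
  have one_le_k : (1 : ℝ) ≤ k := by exact_mod_cast (by omega : 1 ≤ k)
  exact stmt_10_general (Real.sq_sqrt (sub_nonneg.mpr one_le_k)) d
end

section
/- For all integers k ≥ 3 and d ≥ 0, G_{k,d}(−2√(k−1)) = (−1)^d·((d+1)·(√(k−1))^d − d·(√(k−1))^{d−1}). -/
/-!
If `s ^ 2 = k - 1`, the substitution `x = 2 * s * y` turns the recursion for `G_{k,i}` into that of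
`s ^ i * U_i(y)`, where `U_i` is the Chebyshev polynomial of the second kind. The initial values
then give `G_{k,i}(2 * s * y) = s ^ i * U_i(y) + s ^ (i - 1) * U_{i-1}(y)` for `i ≥ 1`, and it
remains to recall that `U_i(-1) = (-1) ^ i * (i + 1)`.
-/

open Polynomial

lemma Gpol_succ_eq_chebyshev_U {k : ℕ} {s : ℝ} (hs : s ^ 2 = k - 1) (d : ℕ) (y : ℝ) :
    Gpol k (d + 1) (2 * s * y) =
      s ^ (d + 1) * (Chebyshev.U ℝ (d + 1)).eval y + s ^ d * (Chebyshev.U ℝ d).eval y := by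
  have U_rec (n : ℤ) : (Chebyshev.U ℝ (n + 2)).eval y =
      2 * y * (Chebyshev.U ℝ (n + 1)).eval y - (Chebyshev.U ℝ n).eval y := by
    simp [Chebyshev.U_add_two]
  induction d using Nat.twoStepInduction with
  | zero => simp [Gpol, mul_assoc, mul_left_comm]
  | one =>
    simp only [Gpol, ← hs, Nat.cast_one, one_add_one_eq_two, Chebyshev.U_two, Chebyshev.U_one,
      eval_sub, eval_mul, eval_pow, eval_X, eval_ofNat, eval_one]
    ring
  | more n ih ih_succ =>
    rw [Gpol, ih, ih_succ, ← hs]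
    linear_combination (norm := (push_cast; ring_nf))
      -s ^ (n + 3) * U_rec (n + 1) - s ^ (n + 2) * U_rec n

theorem stmt_11_general {k : ℕ} {s : ℝ} (hs : s ^ 2 = k - 1) (d : ℕ) :
    Gpol k d (-(2 * s)) = (-1 : ℝ) ^ d * ((d + 1 : ℝ) * s ^ d - (d : ℝ) * s ^ (d - 1)) := by
  have U_at_neg_one (n : ℕ) : (Chebyshev.U ℝ n).eval (-1) = (-1) ^ n * (n + 1) := by simp
  cases d with
  | zero => simp [Gpol]
  | succ n =>
    rw [← mul_neg_one (2 * s), Gpol_succ_eq_chebyshev_U hs, ← Nat.cast_add_one, U_at_neg_one,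
      U_at_neg_one, Nat.add_sub_cancel]
    push_cast
    ring

/-- `G_{k,d}(−2√(k−1)) = (−1)^d((d+1)(√(k−1))^d − d(√(k−1))^{d−1})`. -/
theorem stmt_11 (k d : ℕ) (hk : 3 ≤ k) :
    Gpol k d (-(2 * Real.sqrt ((k : ℝ) - 1)))
      = (-1 : ℝ) ^ d * ((d + 1 : ℝ) * (Real.sqrt ((k : ℝ) - 1)) ^ d
        - (d : ℝ) * (Real.sqrt ((k : ℝ) - 1)) ^ (d - 1)) :=
  stmt_11_general (Real.sq_sqrt (sub_nonneg.mpr (Nat.one_le_cast.mpr (by lia)))) d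
end

section
/- Let k ≥ 3 and d ≥ 0 be integers. For every real x with 2√(k−1) < x < k, one has G_{k,d}(x) > 0. -/
/-! If the characteristic polynomial `T² - pT + q` of a two-term recurrence is nonpositive at some
`0 ≤ s < p`, then growth by a factor greater than `s` propagates from one step to the next, and with
it positivity. For `G_{k,i}(x)` the midpoint `s = x / 2` of the two roots works as soon as the
discriminant `x² - 4(k - 1)` is nonnegative. -/

theorem pos_and_mul_lt_succ_of_recurrence {R : Type*} [CommRing R] [PartialOrder R]
    [IsStrictOrderedRing R] {u : ℕ → R} {p q s : R} (hs : 0 ≤ s) (hsp : s < p)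
    (hchar : s ^ 2 - p * s + q ≤ 0) (hu₀ : 0 < u 0) (hu₁ : s * u 0 < u 1)
    (hrec : ∀ n, p * u (n + 1) - q * u n ≤ u (n + 2)) (n : ℕ) :
    0 < u n ∧ s * u n < u (n + 1) := by
  induction n with
  | zero => exact ⟨hu₀, hu₁⟩
  | succ n ih =>
    obtain ⟨hpos, hgrowth⟩ := ih
    refine ⟨(mul_nonneg hs hpos.le).trans_lt hgrowth, sub_pos.mp ?_⟩
    calc
      0 < (p - s) * (u (n + 1) - s * u n) + -(s ^ 2 - p * s + q) * u n :=
        add_pos_of_pos_of_nonneg (mul_pos (sub_pos.mpr hsp) (sub_pos.mpr hgrowth))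
          (mul_nonneg (neg_nonneg.mpr hchar) hpos.le)
      _ = p * u (n + 1) - q * u n - s * u (n + 1) := by ring
      _ ≤ u (n + 2) - s * u (n + 1) := sub_le_sub_right (hrec n) _

theorem stmt_12_general (k d : ℕ) {x : ℝ} (hx : 0 < x) (hdiscrim : 4 * ((k : ℝ) - 1) ≤ x ^ 2) :
    0 < Gpol k d x := by
  have hchar : (x / 2) ^ 2 - x * (x / 2) + ((k : ℝ) - 1) ≤ 0 := by linarith
  have hinit : x / 2 * Gpol k 0 x < Gpol k 1 x := by
    simp only [Gpol]
    linarith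
  exact (pos_and_mul_lt_succ_of_recurrence (u := fun i ↦ Gpol k i x) (half_pos hx).le
    (half_lt_self hx) hchar one_pos hinit (fun _ ↦ le_rfl) d).1

/-- For `2√(k−1) < x < k`, one has `G_{k,d}(x) > 0`. -/
theorem stmt_12 (k d : ℕ) (hk : 3 ≤ k) (x : ℝ)
    (hx1 : 2 * Real.sqrt ((k : ℝ) - 1) < x) (hx2 : x < (k : ℝ)) :
    0 < Gpol k d x := by
  have hsqrt : √((k : ℝ) - 1) < x / 2 := by linarith
  exact stmt_12_general k d (by linarith [Real.sqrt_nonneg ((k : ℝ) - 1)])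
    (by linarith [Real.lt_sq_of_sqrt_lt hsqrt])
end

section
/- Let k ≥ 3 be an integer and let x be a real number with 2√(k−1) < x < k. If d is a positive integer satisfying d·√(x² − 4k + 4) > x, then the derivative of the polynomial function y ↦ G_{k,d}(y) at the point x is strictly positive. -/
/-!
If `x > 0` and the characteristic polynomial `X² - x X + c` of a recurrence has nonnegative
discriminant, then `u (n + 2) ≥ x * u (n + 1) - c * u n` propagates the growth condition
`u (n + 1) ≥ (x / 2) * u n`, hence positivity. The sequence `G_{k,n}(x)` satisfies this recurrence
with `c = k - 1`. Differentiating the recurrence adds the term `G_{k,n+1}(x)`, which is positive,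
so the derivatives satisfy it as an inequality and are positive as well.
-/

theorem pos_succ_of_recurrence_le {R : Type*} [CommRing R] [LinearOrder R] [IsStrictOrderedRing R]
    {u : ℕ → R} {c x : R} (hx : 0 < x) (hdisc : 4 * c ≤ x ^ 2) (hu₀ : 0 ≤ u 0) (hu₁ : 0 < u 1)
    (hgrowth : x * u 0 ≤ 2 * u 1) (hrec : ∀ n, x * u (n + 1) - c * u n ≤ u (n + 2)) (n : ℕ) :
    0 < u (n + 1) := by
  suffices h : 0 ≤ u n ∧ 0 < u (n + 1) ∧ x * u n ≤ 2 * u (n + 1) from h.2.1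
  induction n with
  | zero => exact ⟨hu₀, hu₁, hgrowth⟩
  | succ n ih =>
    obtain ⟨hnonneg, hpos, hratio⟩ := ih
    have hc : 4 * (c * u n) ≤ 2 * (x * u (n + 1)) := calc
      4 * (c * u n) = 4 * c * u n := by ring
      _ ≤ x ^ 2 * u n := by gcongr
      _ = x * (x * u n) := by ring
      _ ≤ x * (2 * u (n + 1)) := by gcongr
      _ = 2 * (x * u (n + 1)) := by ring
    have hratio' : x * u (n + 1) ≤ 2 * u (n + 2) := by linarith [hrec n]
    have hxu : 0 < x * u (n + 1) := mul_pos hx hpos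
    exact ⟨hpos.le, by linarith, hratio'⟩

theorem Gpol_zero (k : ℕ) : Gpol k 0 = fun _ ↦ 1 := rfl

theorem Gpol_one (k : ℕ) : Gpol k 1 = fun x ↦ x + 1 := rfl

theorem Gpol_add_two (k n : ℕ) :
    Gpol k (n + 2) = fun x ↦ x * Gpol k (n + 1) x - ((k : ℝ) - 1) * Gpol k n x := rfl

theorem differentiable_Gpol (k n : ℕ) : Differentiable ℝ (Gpol k n) := by
  induction n using Nat.twoStepInduction with
  | zero => rw [Gpol_zero]; fun_prop
  | one => rw [Gpol_one]; fun_prop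
  | more n ih ih' => rw [Gpol_add_two]; fun_prop

theorem deriv_Gpol_add_two (k n : ℕ) (x : ℝ) :
    deriv (Gpol k (n + 2)) x =
      Gpol k (n + 1) x + x * deriv (Gpol k (n + 1)) x - ((k : ℝ) - 1) * deriv (Gpol k n) x := by
  have hdiff (m : ℕ) : DifferentiableAt ℝ (Gpol k m) x := differentiable_Gpol k m x
  rw [Gpol_add_two, deriv_fun_sub (by fun_prop) (by fun_prop),
    deriv_fun_mul differentiableAt_fun_id (hdiff _), deriv_const_mul _ (hdiff n),
    deriv_id'', one_mul]

theorem Gpol_succ_pos {k : ℕ} {x : ℝ} (hx : 0 < x) (hdisc : 4 * ((k : ℝ) - 1) ≤ x ^ 2) (n : ℕ) :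
    0 < Gpol k (n + 1) x := by
  have hgrowth : x * Gpol k 0 x ≤ 2 * Gpol k 1 x := by
    simp only [Gpol_zero, Gpol_one]
    linarith
  exact pos_succ_of_recurrence_le (u := fun n ↦ Gpol k n x) hx hdisc zero_le_one
    (add_pos hx one_pos) hgrowth (fun m ↦ (congrFun (Gpol_add_two k m) x).ge) n

theorem stmt_13_general (k : ℕ) {x : ℝ} (hx : 0 < x) (hdisc : 4 * ((k : ℝ) - 1) ≤ x ^ 2)
    {d : ℕ} (hd : 0 < d) : 0 < deriv (Gpol k d) x := by
  obtain ⟨n, rfl⟩ := Nat.exists_eq_add_one.mpr hd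
  have hderiv₀ : deriv (Gpol k 0) x = 0 := by simp [Gpol_zero]
  have hderiv₁ : deriv (Gpol k 1) x = 1 := by simp [Gpol_one]
  have hrec (m : ℕ) : x * deriv (Gpol k (m + 1)) x - ((k : ℝ) - 1) * deriv (Gpol k m) x ≤
      deriv (Gpol k (m + 2)) x := by
    linarith [deriv_Gpol_add_two k m x, Gpol_succ_pos hx hdisc m]
  exact pos_succ_of_recurrence_le (u := fun n ↦ deriv (Gpol k n) x) hx hdisc
    hderiv₀.ge (by simp [hderiv₁]) (by simp [hderiv₀, hderiv₁]) hrec n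

/-- If `2√(k−1) < x < k` and `d√(x² − 4k + 4) > x` with `d ≥ 1`, then the derivative of
`y ↦ G_{k,d}(y)` at `x` is positive. -/
theorem stmt_13 (k : ℕ) (hk : 3 ≤ k) (x : ℝ)
    (hx1 : 2 * Real.sqrt ((k : ℝ) - 1) < x) (hx2 : x < (k : ℝ))
    (d : ℕ) (hd : 0 < d) (hdx : (d : ℝ) * Real.sqrt (x ^ 2 - 4 * k + 4) > x) :
    0 < deriv (fun y : ℝ => Gpol k d y) x := by
  have hsqrt : √((k : ℝ) - 1) < x / 2 := by linarith
  exact stmt_13_general k (by linarith [Real.sqrt_nonneg ((k : ℝ) - 1)])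
    (by linarith [Real.lt_sq_of_sqrt_lt hsqrt]) hd
end

section
/- Let k ≥ 3 be an integer and let d be an even positive integer. For every real x with −k < x < −2√(k−1), one has G_{k,d}(x) > 0. -/
/-!
The sequence `uᵢ = (-1)ⁱ G_{k,i}(x)` satisfies `uᵢ₊₂ = t uᵢ₊₁ - s² uᵢ` with `t = -x` and
`s = √(k - 1)`. Since `2 s ≤ t`, the characteristic polynomial `r² - t r + s²` is nonpositive at
`r = s`, so the inequality `s uᵢ ≤ uᵢ₊₁` propagates along the recurrence and `u` grows at least
geometrically with ratio `s`. The initial inequality `s u₀ ≤ u₁` reads `s ≤ t - 1`, which follows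
from `2 s ≤ t` and `1 ≤ s`.
-/

theorem nonneg_and_mul_le_succ_of_linear_recurrence {R : Type*} [CommRing R] [PartialOrder R]
    [IsOrderedRing R] {u : ℕ → R} {c r t : R} (hr : 0 ≤ r) (hrt : r ≤ t)
    (hc : c ≤ (t - r) * r) (hu : ∀ n, t * u (n + 1) - c * u n ≤ u (n + 2))
    (h0 : 0 ≤ u 0) (h1 : r * u 0 ≤ u 1) (n : ℕ) :
    0 ≤ u n ∧ r * u n ≤ u (n + 1) := by
  induction n with
  | zero => exact ⟨h0, h1⟩
  | succ n ih =>
    obtain ⟨hn, hratio⟩ := ih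
    have hdefect : c * u n ≤ (t - r) * u (n + 1) :=
      calc c * u n ≤ (t - r) * r * u n := mul_le_mul_of_nonneg_right hc hn
        _ = (t - r) * (r * u n) := mul_assoc ..
        _ ≤ (t - r) * u (n + 1) := mul_le_mul_of_nonneg_left hratio (sub_nonneg.2 hrt)
    refine ⟨(mul_nonneg hr hn).trans hratio, ?_⟩
    calc r * u (n + 1) = t * u (n + 1) - (t - r) * u (n + 1) := by ring
      _ ≤ t * u (n + 1) - c * u n := sub_le_sub_left hdefect _
      _ ≤ u (n + 2) := hu n

theorem neg_one_pow_mul_Gpol_add_two (k n : ℕ) (x : ℝ) :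
    (-1) ^ (n + 2) * Gpol k (n + 2) x =
      -x * ((-1) ^ (n + 1) * Gpol k (n + 1) x) - (k - 1) * ((-1) ^ n * Gpol k n x) := by
  rw [Gpol]
  ring

theorem sqrt_pow_le_neg_one_pow_mul_Gpol {k : ℕ} (hk : 2 ≤ k) {x : ℝ}
    (hx : x ≤ -(2 * √((k : ℝ) - 1))) (d : ℕ) :
    √((k : ℝ) - 1) ^ d ≤ (-1) ^ d * Gpol k d x := by
  have hk' : (1 : ℝ) ≤ k - 1 := by
    have : (2 : ℝ) ≤ k := by exact_mod_cast hk
    linarith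
  set s := √((k : ℝ) - 1)
  have hs_one : 1 ≤ s := Real.one_le_sqrt.2 hk'
  have hs_sq : (k : ℝ) - 1 = s * s := (Real.mul_self_sqrt (by linarith)).symm
  have hchar : (k : ℝ) - 1 ≤ (-x - s) * s := by
    rw [hs_sq]
    exact mul_le_mul_of_nonneg_right (by linarith) (by linarith)
  have hinit : s * ((-1) ^ 0 * Gpol k 0 x) ≤ (-1) ^ 1 * Gpol k 1 x := by
    simp only [Gpol]
    linarith
  have hratio (n : ℕ) :
      s * ((-1) ^ n * Gpol k n x) ≤ (-1) ^ (n + 1) * Gpol k (n + 1) x :=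
    (nonneg_and_mul_le_succ_of_linear_recurrence (u := fun n => (-1) ^ n * Gpol k n x)
      (by linarith) (by linarith) hchar (fun n => (neg_one_pow_mul_Gpol_add_two k n x).ge)
      (by simp [Gpol]) hinit n).2
  simpa [Gpol] using geom_le (by linarith) d fun n _ => hratio n

theorem stmt_14_general (k d : ℕ) (hk : 2 ≤ k) (x : ℝ)
    (hx : x ≤ -(2 * √((k : ℝ) - 1))) :
    0 < (-1) ^ d * Gpol k d x := by
  have hk' : (0 : ℝ) < k - 1 := sub_pos.2 (by exact_mod_cast hk)
  exact (pow_pos (Real.sqrt_pos.2 hk') d).trans_le (sqrt_pow_le_neg_one_pow_mul_Gpol hk hx d)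

/-- For even `d ≥ 1` and `−k < x < −2√(k−1)`, one has `G_{k,d}(x) > 0`. -/
theorem stmt_14 (k d : ℕ) (hk : 3 ≤ k) (hd : Even d) (hdpos : 0 < d) (x : ℝ)
    (hx1 : -(k : ℝ) < x) (hx2 : x < -(2 * Real.sqrt ((k : ℝ) - 1))) :
    0 < Gpol k d x := by
  simpa only [hd.neg_one_pow, one_mul] using stmt_14_general k d (by omega) x hx2.le
end

section
/- Let k ≥ 3 be an integer and let d be an even positive integer. For every real x with −k < x < −2√(k−1), the derivative of the polynomial function y ↦ G_{k,d}(y) at the point x is strictly negative; consequently G_{k,d} is strictly decreasing on the interval [−k, −2√(k−1)], and G_{k,d}(x) ≥ G_{k,d}(−2√(k−1)) for all x in that interval. -/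
/-!
Put `s = √(k - 1)` and `t = -x ≥ 2s`. The values `(-1)^i G_{k,i}(x)` satisfy the recurrence
`u_{i+2} = t u_{i+1} - s² u_i`, and the derivatives `(-1)^i G'_{k,i+1}(x)` satisfy the same
recurrence with a nonnegative term added, namely the values themselves. Such sequences stay
positive, because `u_{i+2} - s u_{i+1} ≥ s (u_{i+1} - s u_i)` as long as `u_{i+1} ≥ 0`.
-/

theorem pos_of_recurrence {R : Type*} [CommRing R] [LinearOrder R] [IsStrictOrderedRing R]
    {s t : R} {u : ℕ → R} (hs : 0 < s) (hst : 2 * s ≤ t) (h₀ : 0 < u 0) (h₁ : s * u 0 ≤ u 1)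
    (hrec : ∀ i, t * u (i + 1) - s ^ 2 * u i ≤ u (i + 2)) (i : ℕ) : 0 < u i := by
  suffices 0 < u i ∧ s * u i ≤ u (i + 1) from this.1
  induction i with
  | zero => exact ⟨h₀, h₁⟩
  | succ i ih =>
    obtain ⟨hpos, hle⟩ := ih
    have hpos' : 0 < u (i + 1) := (mul_pos hs hpos).trans_le hle
    refine ⟨hpos', ?_⟩
    calc
      s * u (i + 1) ≤ s * u (i + 1) + s * (u (i + 1) - s * u i) :=
        le_add_of_nonneg_right (mul_nonneg hs.le (sub_nonneg.2 hle))
      _ = 2 * s * u (i + 1) - s ^ 2 * u i := by ring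
      _ ≤ t * u (i + 1) - s ^ 2 * u i := by gcongr
      _ ≤ u (i + 2) := hrec i

namespace Gpol

theorem differentiable (k : ℕ) : ∀ i, Differentiable ℝ (Gpol k i)
  | 0 => differentiable_const 1
  | 1 => differentiable_id.add_const 1
  | i + 2 =>
    (differentiable_id.mul (differentiable k (i + 1))).sub ((differentiable k i).const_mul _)

theorem deriv_zero (k : ℕ) (x : ℝ) : deriv (Gpol k 0) x = 0 :=
  deriv_const x 1

theorem deriv_one (k : ℕ) (x : ℝ) : deriv (Gpol k 1) x = 1 :=
  ((hasDerivAt_id x).add_const 1).deriv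

theorem deriv_add_two (k i : ℕ) (x : ℝ) :
    deriv (Gpol k (i + 2)) x =
      Gpol k (i + 1) x + x * deriv (Gpol k (i + 1)) x - (k - 1 : ℝ) * deriv (Gpol k i) x := by
  have hasDerivAt (j : ℕ) := (differentiable k j x).hasDerivAt
  have h : HasDerivAt (Gpol k (i + 2)) (1 * Gpol k (i + 1) x + x * deriv (Gpol k (i + 1)) x -
      (k - 1 : ℝ) * deriv (Gpol k i) x) x :=
    ((hasDerivAt_id x).mul (hasDerivAt (i + 1))).sub ((hasDerivAt i).const_mul _)
  rw [h.deriv, one_mul]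

variable {k : ℕ} {s x : ℝ}

theorem neg_one_pow_mul_pos (hs : 1 ≤ s) (hsk : s ^ 2 = k - 1) (hx : x ≤ -(2 * s)) (i : ℕ) :
    0 < (-1) ^ i * Gpol k i x := by
  refine pos_of_recurrence (s := s) (t := -x) (u := fun i ↦ (-1) ^ i * Gpol k i x)
    (by linarith) (by linarith) ?_ ?_ (fun i ↦ le_of_eq ?_) i
  · simp [Gpol]
  · simp only [Gpol]
    linarith
  · rw [hsk, Gpol]
    ring

theorem neg_one_pow_mul_deriv_succ_pos (hs : 1 ≤ s) (hsk : s ^ 2 = k - 1)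
    (hx : x ≤ -(2 * s)) (i : ℕ) : 0 < (-1) ^ i * deriv (Gpol k (i + 1)) x := by
  refine pos_of_recurrence (s := s) (t := -x) (u := fun i ↦ (-1) ^ i * deriv (Gpol k (i + 1)) x)
    (by linarith) (by linarith) ?_ ?_ (fun i ↦ ?_) i
  · simp [deriv_one]
  · have deriv_two : deriv (Gpol k 2) x = 2 * x + 1 := by
      rw [deriv_add_two, deriv_one, deriv_zero, Gpol]
      ring
    simp only [zero_add, Nat.reduceAdd, deriv_one, deriv_two]
    linarith
  · have value_pos : 0 < (-1) ^ (i + 2) * Gpol k (i + 2) x := neg_one_pow_mul_pos hs hsk hx (i + 2)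
    rw [hsk, deriv_add_two k (i + 1) x]
    linear_combination value_pos.le

end Gpol

theorem stmt_15_general (k d : ℕ) (hk : 2 ≤ k) (hdpos : 0 < d) :
    (∀ x ≤ -(2 * √((k : ℝ) - 1)), deriv (fun y ↦ (-1) ^ d * Gpol k d y) x < 0) ∧
    StrictAntiOn (fun y ↦ (-1) ^ d * Gpol k d y) (Set.Iic (-(2 * √((k : ℝ) - 1)))) := by
  have hk' : (2 : ℝ) ≤ k := by exact_mod_cast hk
  have hs : 1 ≤ √((k : ℝ) - 1) := Real.one_le_sqrt.2 (by linarith)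
  have hsk : √((k : ℝ) - 1) ^ 2 = k - 1 := Real.sq_sqrt (by linarith)
  have deriv_neg : ∀ x ≤ -(2 * √((k : ℝ) - 1)), deriv (fun y ↦ (-1) ^ d * Gpol k d y) x < 0 := by
    intro x hx
    obtain ⟨i, rfl⟩ := Nat.exists_eq_add_of_le' hdpos
    rw [deriv_const_mul _ (Gpol.differentiable k _ x)]
    linear_combination Gpol.neg_one_pow_mul_deriv_succ_pos hs hsk hx i
  refine ⟨deriv_neg, strictAntiOn_of_deriv_neg (convex_Iic _) ?_ fun x hx ↦
    deriv_neg x (Set.mem_Iic.1 (interior_subset hx))⟩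
  exact ((Gpol.differentiable k d).const_mul _).continuous.continuousOn

/-- For even `d ≥ 1`: the derivative of `G_{k,d}` is negative on `(−k, −2√(k−1))`,
`G_{k,d}` is strictly decreasing on `[−k, −2√(k−1)]`, and on that interval
`G_{k,d}(x) ≥ G_{k,d}(−2√(k−1))`. -/
theorem stmt_15 (k d : ℕ) (hk : 3 ≤ k) (hd : Even d) (hdpos : 0 < d) :
    (∀ x : ℝ, -(k : ℝ) < x → x < -(2 * Real.sqrt ((k : ℝ) - 1)) →
        deriv (fun y : ℝ => Gpol k d y) x < 0) ∧
    StrictAntiOn (fun y : ℝ => Gpol k d y)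
        (Set.Icc (-(k : ℝ)) (-(2 * Real.sqrt ((k : ℝ) - 1)))) ∧
    (∀ x ∈ Set.Icc (-(k : ℝ)) (-(2 * Real.sqrt ((k : ℝ) - 1))),
        Gpol k d (-(2 * Real.sqrt ((k : ℝ) - 1))) ≤ Gpol k d x) := by
  obtain ⟨deriv_neg, anti⟩ := by
    simpa only [hd.neg_one_pow, one_mul] using stmt_15_general k d (by lia) hdpos
  exact ⟨fun x _ hx ↦ deriv_neg x hx.le, anti.mono Set.Icc_subset_Iic_self,
    fun x hx ↦ anti.antitoneOn hx.2 Set.self_mem_Iic hx.2⟩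
end

section
/- Let k ≥ 3 and d ≥ 3 be integers, and let Γ be a finite connected k-regular simple graph of diameter at most d whose girth g satisfies 3 ≤ g ≤ 2d − 2. Then |V(Γ)| ≤ M(k,d) − k; that is, the defect of Γ is at least k. -/
/-!
Fix a vertex `v` on a cycle of length at most `2d - 2` and split the graph into spheres about `v`.
The Moore bound counts the levels of a tree in which every vertex but the root has one parent and at
most `k - 1` children. A point of the cycle farthest from `v` either has two neighbours one step
closer to `v`, which costs one vertex on its own sphere and another on the next one, or has a
neighbour on its own sphere, which costs two vertices on the next sphere. A loss is multiplied by
`k - 1` at each further level, and the length bound leaves room for one such level, where the loss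
is `1 + (k - 1) = k`, respectively `2(k - 1) ≥ k`.
-/

open Finset

section Distance

variable {V : Type*} {G : SimpleGraph V}

lemma exists_adj_dist_add_one_eq_s16 {v u : V} (h : G.dist v u ≠ 0) :
    ∃ w, G.Adj u w ∧ G.dist v w + 1 = G.dist v u := by
  obtain ⟨p, hp⟩ := SimpleGraph.exists_walk_of_dist_ne_zero h
  have hnil : ¬ p.Nil := by rw [← SimpleGraph.Walk.length_eq_zero_iff]; lia
  have hadj := p.adj_penultimate hnil
  have hle : G.dist v p.penultimate ≤ p.length - 1 := by
    simpa only [SimpleGraph.Walk.length_dropLast] using SimpleGraph.dist_le p.dropLast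
  have hdiff := hadj.diff_dist_adj (u := v)
  exact ⟨_, hadj.symm, by lia⟩

lemma dist_getVert_le {v u : V} (p : G.Walk v u) (i : ℕ) : G.dist v (p.getVert i) ≤ i :=
  (SimpleGraph.dist_le (p.take i)).trans (by simp only [SimpleGraph.Walk.take_length, inf_le_left])

lemma dist_getVert_le_length_sub {v : V} (p : G.Walk v v) (i : ℕ) :
    G.dist v (p.getVert i) ≤ p.length - i := by
  rw [SimpleGraph.dist_comm, ← SimpleGraph.Walk.drop_length]
  exact SimpleGraph.dist_le (p.drop i)

lemma exists_forall_dist_getVert_le {v : V} {c : G.Walk v v} (hc : c.IsCycle) :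
    ∃ m, G.dist v (c.getVert m) ≠ 0 ∧ ∀ i, G.dist v (c.getVert i) ≤ G.dist v (c.getVert m) := by
  have hlen := hc.three_le_length
  obtain ⟨m, -, hmax⟩ := exists_max_image (range (c.length + 1))
    (fun i ↦ G.dist v (c.getVert i)) ⟨0, by simp⟩
  simp only [mem_range] at hmax
  have hone : G.dist v (c.getVert 1) = 1 := by
    simpa using c.adj_getVert_succ (i := 0) (by lia)
  have hm := hmax 1 (by lia)
  refine ⟨m, by lia, fun i ↦ ?_⟩
  obtain hi | hi := le_total i c.length
  · exact hmax i (by lia)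
  · simp [c.getVert_of_length_le hi]

end Distance

section Neighbors

variable {V : Type*} (G : SimpleGraph V) [G.LocallyFinite] (v u : V)

/-- The neighbours of `u` one step closer to the root `v`: the vertices `u` may be reached from in a
breadth-first search from `v`. -/
noncomputable def distParents : Finset V := {w ∈ G.neighborFinset u | G.dist v w + 1 = G.dist v u}

/-- The neighbours of `u` at the same distance from the root `v` as `u`. -/
noncomputable def distSiblings : Finset V := {w ∈ G.neighborFinset u | G.dist v w = G.dist v u}

/-- The neighbours of `u` one step farther from the root `v`. -/
noncomputable def distChildren : Finset V := {w ∈ G.neighborFinset u | G.dist v w = G.dist v u + 1}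

variable {G v u} {w : V}

@[simp] lemma mem_distParents :
    w ∈ distParents G v u ↔ G.Adj u w ∧ G.dist v w + 1 = G.dist v u := by
  simp [distParents]

@[simp] lemma mem_distSiblings :
    w ∈ distSiblings G v u ↔ G.Adj u w ∧ G.dist v w = G.dist v u := by
  simp [distSiblings]

@[simp] lemma mem_distChildren :
    w ∈ distChildren G v u ↔ G.Adj u w ∧ G.dist v w = G.dist v u + 1 := by
  simp [distChildren]

lemma card_distParents_pos (h : G.dist v u ≠ 0) : 0 < #(distParents G v u) := by
  obtain ⟨w, hw⟩ := exists_adj_dist_add_one_eq_s16 h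
  exact card_pos.2 ⟨w, mem_distParents.2 hw⟩

lemma mem_distParents_or_mem_distSiblings (hadj : G.Adj u w) (hle : G.dist v w ≤ G.dist v u) :
    w ∈ distParents G v u ∨ w ∈ distSiblings G v u := by
  have hdiff := hadj.diff_dist_adj (u := v)
  simp only [mem_distParents, mem_distSiblings, hadj, true_and]
  lia

lemma two_le_dist_of_one_lt_card_distParents (h : 1 < #(distParents G v u)) : 2 ≤ G.dist v u := by
  by_contra! hlt
  refine h.not_ge (card_le_card (t := {v}) fun w hw ↦ ?_)
  obtain ⟨hadj, hdist⟩ := mem_distParents.1 hw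
  have hreach : G.Reachable v w :=
    (SimpleGraph.Reachable.of_dist_ne_zero (by lia : G.dist v u ≠ 0)).trans hadj.reachable
  have hvw : v = w := hreach.dist_eq_zero_iff.1 (by lia)
  exact mem_singleton.2 hvw.symm

variable (G v u) in
lemma card_distChildren_add_card_distParents_add_card_distSiblings :
    #(distChildren G v u) + #(distParents G v u) + #(distSiblings G v u) = G.degree u := by
  rw [← G.card_neighborFinset_eq_degree, card_eq_sum_ones (G.neighborFinset u)]
  simp only [distChildren, distParents, distSiblings, card_filter, ← sum_add_distrib]
  refine sum_congr rfl fun w hw ↦ ?_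
  have hdiff := ((G.mem_neighborFinset u w).1 hw).diff_dist_adj (u := v)
  split_ifs <;> lia

end Neighbors

section Spheres

variable {V : Type*} [Fintype V] (G : SimpleGraph V) (v : V)

/-- The vertices at distance `i` from `v`. For `i = 0` this includes the vertices not reachable from
`v`, because `SimpleGraph.dist` is `0` there. -/
noncomputable def distSphere (i : ℕ) : Finset V := {u | G.dist v u = i}

variable {G v}

@[simp] lemma mem_distSphere {i : ℕ} {u : V} : u ∈ distSphere G v i ↔ G.dist v u = i := by
  simp [distSphere]

lemma distSphere_zero (hconn : G.Connected) : distSphere G v 0 = {v} := by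
  ext u
  simp [hconn.dist_eq_zero_iff, eq_comm]

lemma card_eq_one_add_sum_card_distSphere {d : ℕ} (hconn : G.Connected)
    (hecc : ∀ u, G.dist v u ≤ d) :
    Fintype.card V = 1 + ∑ i ∈ range d, #(distSphere G v (i + 1)) := by
  have hmaps : Set.MapsTo (G.dist v) (univ : Finset V) (range (d + 1)) := fun u _ ↦ by
    simpa using Nat.lt_succ_of_le (hecc u)
  calc Fintype.card V = ∑ i ∈ range (d + 1), #(distSphere G v i) :=
        card_eq_sum_card_fiberwise hmaps
    _ = 1 + ∑ i ∈ range d, #(distSphere G v (i + 1)) := by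
        rw [sum_range_succ', distSphere_zero hconn, card_singleton, add_comm]

variable [G.LocallyFinite] {i k : ℕ}

variable (G v) in
lemma distSphere_one : distSphere G v 1 = G.neighborFinset v := by
  ext u
  simp

variable (G v i) in
lemma sum_card_distChildren :
    ∑ u ∈ distSphere G v i, #(distChildren G v u) =
      ∑ u ∈ distSphere G v (i + 1), #(distParents G v u) := by
  classical
  have hchildren : ∀ u ∈ distSphere G v i,
      distChildren G v u = bipartiteAbove G.Adj (distSphere G v (i + 1)) u := by
    intro u hu
    ext w
    simp_all [and_comm]
  have hparents : ∀ u ∈ distSphere G v (i + 1),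
      distParents G v u = bipartiteBelow G.Adj (distSphere G v i) u := by
    intro u hu
    ext w
    simp_all [and_comm, G.adj_comm]
  rw [sum_congr rfl fun u hu ↦ congrArg card (hchildren u hu),
    sum_congr rfl fun u hu ↦ congrArg card (hparents u hu),
    sum_card_bipartiteAbove_eq_sum_card_bipartiteBelow]

variable (G v i) in
lemma sum_degree_distSphere :
    ∑ u ∈ distSphere G v i, G.degree u =
      ∑ u ∈ distSphere G v (i + 1), #(distParents G v u) +
        ∑ u ∈ distSphere G v i, #(distParents G v u) +
        ∑ u ∈ distSphere G v i, #(distSiblings G v u) := by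
  simp only [← sum_card_distChildren, ← sum_add_distrib,
    card_distChildren_add_card_distParents_add_card_distSiblings]

variable (v i) in
lemma sum_degree_distSphere_le (hdeg : ∀ u, G.degree u ≤ k) :
    ∑ u ∈ distSphere G v i, G.degree u ≤ k * #(distSphere G v i) := by
  rw [mul_comm]
  exact sum_le_card_nsmul _ _ _ fun u _ ↦ hdeg u

lemma card_distParents_pos_of_mem_distSphere {u : V} (hu : u ∈ distSphere G v (i + 1)) :
    0 < #(distParents G v u) :=
  card_distParents_pos (by rw [mem_distSphere.1 hu]; exact i.succ_ne_zero)

variable (G v i) in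
lemma card_distSphere_le_sum_card_distParents :
    #(distSphere G v (i + 1)) ≤ ∑ u ∈ distSphere G v (i + 1), #(distParents G v u) := by
  rw [card_eq_sum_ones]
  exact sum_le_sum fun u hu ↦ card_distParents_pos_of_mem_distSphere hu

lemma card_distSphere_lt_sum_card_distParents {u : V} (hu : u ∈ distSphere G v (i + 1))
    (htwo : 1 < #(distParents G v u)) :
    #(distSphere G v (i + 1)) < ∑ u ∈ distSphere G v (i + 1), #(distParents G v u) := by
  rw [card_eq_sum_ones]
  exact sum_lt_sum (fun u hu ↦ card_distParents_pos_of_mem_distSphere hu) ⟨u, hu, htwo⟩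

lemma two_le_sum_card_distSiblings {x y : V} (hx : x ∈ distSphere G v i)
    (hy : y ∈ distSphere G v i) (hxy : G.Adj x y) :
    2 ≤ ∑ u ∈ distSphere G v i, #(distSiblings G v u) := by
  classical
  have hxpos : 0 < #(distSiblings G v x) := card_pos.2 ⟨y, by simp_all⟩
  have hypos : 0 < #(distSiblings G v y) := card_pos.2 ⟨x, by simp_all [hxy.symm]⟩
  calc 2 ≤ ∑ u ∈ {x, y}, #(distSiblings G v u) := by rw [sum_pair hxy.ne]; lia
    _ ≤ ∑ u ∈ distSphere G v i, #(distSiblings G v u) :=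
        sum_le_sum_of_subset (by simp [insert_subset_iff, *])

variable (v i) in
lemma sum_card_distParents_add_sum_card_distSiblings_le (hdeg : ∀ u, G.degree u ≤ k) :
    ∑ u ∈ distSphere G v (i + 2), #(distParents G v u) +
      ∑ u ∈ distSphere G v (i + 1), #(distSiblings G v u) ≤
        (k - 1) * #(distSphere G v (i + 1)) := by
  have hle := sum_degree_distSphere_le v (i + 1) hdeg
  have hparents := card_distSphere_le_sum_card_distParents G v i
  rw [sum_degree_distSphere] at hle
  rw [Nat.sub_one_mul]
  lia

variable (v i) in
lemma card_distSphere_add_two_le (hdeg : ∀ u, G.degree u ≤ k) :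
    #(distSphere G v (i + 2)) ≤ (k - 1) * #(distSphere G v (i + 1)) :=
  (card_distSphere_le_sum_card_distParents G v (i + 1)).trans <|
    (Nat.le_add_right _ _).trans <| sum_card_distParents_add_sum_card_distSiblings_le v i hdeg

variable (v) in
lemma card_distSphere_succ_le (hdeg : ∀ u, G.degree u ≤ k) (i : ℕ) :
    #(distSphere G v (i + 1)) ≤ k * (k - 1) ^ i := by
  induction i with
  | zero => simpa [distSphere_one] using hdeg v
  | succ i ih =>
    calc #(distSphere G v (i + 2)) ≤ (k - 1) * #(distSphere G v (i + 1)) :=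
          card_distSphere_add_two_le v i hdeg
      _ ≤ (k - 1) * (k * (k - 1) ^ i) := Nat.mul_le_mul_left _ ih
      _ = k * (k - 1) ^ (i + 1) := by ring

lemma card_distSphere_add_le_of_one_lt_card_distParents (hdeg : ∀ u, G.degree u ≤ k) {u : V}
    (hu : u ∈ distSphere G v (i + 2)) (htwo : 1 < #(distParents G v u)) :
    #(distSphere G v (i + 3)) + k ≤ k * (k - 1) ^ (i + 2) := by
  have hparents := card_distSphere_lt_sum_card_distParents hu htwo
  have hlevel : #(distSphere G v (i + 2)) + 1 ≤ (k - 1) * #(distSphere G v (i + 1)) := by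
    have hle := sum_card_distParents_add_sum_card_distSiblings_le v i hdeg
    lia
  have hnext : #(distSphere G v (i + 3)) + 1 ≤ (k - 1) * #(distSphere G v (i + 2)) := by
    have hle := sum_degree_distSphere_le v (i + 2) hdeg
    have hparents' := card_distSphere_le_sum_card_distParents G v (i + 2)
    rw [sum_degree_distSphere] at hle
    rw [Nat.sub_one_mul]
    lia
  calc #(distSphere G v (i + 3)) + k ≤ (k - 1) * (#(distSphere G v (i + 2)) + 1) := by
        rw [mul_add_one]; lia
    _ ≤ (k - 1) * ((k - 1) * #(distSphere G v (i + 1))) := Nat.mul_le_mul_left _ hlevel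
    _ ≤ (k - 1) * ((k - 1) * (k * (k - 1) ^ i)) := by
        gcongr
        exact card_distSphere_succ_le v hdeg i
    _ = k * (k - 1) ^ (i + 2) := by ring

lemma card_distSphere_add_le_of_adj (hdeg : ∀ u, G.degree u ≤ k) {x y : V}
    (hx : x ∈ distSphere G v (i + 1)) (hy : y ∈ distSphere G v (i + 1)) (hxy : G.Adj x y) :
    #(distSphere G v (i + 3)) + k ≤ k * (k - 1) ^ (i + 2) := by
  have hnext : #(distSphere G v (i + 2)) + 2 ≤ (k - 1) * #(distSphere G v (i + 1)) := by
    have hle := sum_card_distParents_add_sum_card_distSiblings_le v i hdeg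
    have hparents := card_distSphere_le_sum_card_distParents G v (i + 1)
    have hsiblings := two_le_sum_card_distSiblings hx hy hxy
    lia
  have hk : k - 1 ≠ 0 := by
    intro hk
    simp [hk] at hnext
  have hgrowth := card_distSphere_add_two_le v (i + 1) hdeg
  calc #(distSphere G v (i + 3)) + k ≤ (k - 1) * (#(distSphere G v (i + 2)) + 2) := by
        rw [mul_add]; lia
    _ ≤ (k - 1) * ((k - 1) * #(distSphere G v (i + 1))) := Nat.mul_le_mul_left _ hnext
    _ ≤ (k - 1) * ((k - 1) * (k * (k - 1) ^ i)) := by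
        gcongr
        exact card_distSphere_succ_le v hdeg i
    _ = k * (k - 1) ^ (i + 2) := by ring

lemma exists_one_lt_card_distParents_or_adj {c : G.Walk v v} (hc : c.IsCycle) :
    ∃ i, (2 * i + 4 ≤ c.length ∧ ∃ u ∈ distSphere G v (i + 2), 1 < #(distParents G v u)) ∨
      (2 * i + 3 ≤ c.length ∧
        ∃ x ∈ distSphere G v (i + 1), ∃ y ∈ distSphere G v (i + 1), G.Adj x y) := by
  obtain ⟨m, hpos, hmax⟩ := exists_forall_dist_getVert_le hc
  have hm := dist_getVert_le c m
  have hm' := dist_getVert_le_length_sub c m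
  obtain ⟨j, rfl⟩ := Nat.exists_eq_add_of_le' (by lia : 1 ≤ m)
  obtain ⟨r, hr⟩ := Nat.exists_eq_add_of_le' (Nat.one_le_iff_ne_zero.2 hpos)
  have hprev := (c.adj_getVert_succ (i := j) (by lia)).symm
  have hnext := c.adj_getVert_succ (i := j + 1) (by lia)
  obtain hprev_parent | hprev_sibling := mem_distParents_or_mem_distSiblings hprev (hmax j)
  · obtain hnext_parent | hnext_sibling := mem_distParents_or_mem_distSiblings hnext (hmax (j + 2))
    · have hne : c.getVert j ≠ c.getVert (j + 2) :=
        hc.getVert_sub_one_ne_getVert_add_one (i := j + 1) (by lia)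
      have htwo := one_lt_card.2 ⟨_, hprev_parent, _, hnext_parent, hne⟩
      have hfar := two_le_dist_of_one_lt_card_distParents htwo
      exact ⟨r - 1, .inl ⟨by lia, _, by rw [mem_distSphere]; lia, htwo⟩⟩
    · have hnext_dist := (mem_distSiblings.1 hnext_sibling).2.trans hr
      have hnext_le := dist_getVert_le_length_sub c (j + 2)
      exact ⟨r, .inr ⟨by lia, _, mem_distSphere.2 hr, _, mem_distSphere.2 hnext_dist, hnext⟩⟩
  · have hprev_dist := (mem_distSiblings.1 hprev_sibling).2.trans hr
    have hprev_le := dist_getVert_le c j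
    exact ⟨r, .inr ⟨by lia, _, mem_distSphere.2 hr, _, mem_distSphere.2 hprev_dist, hprev⟩⟩

lemma card_add_le_mooreBound {d j : ℕ} (hconn : G.Connected) (hdeg : ∀ u, G.degree u ≤ k)
    (hecc : ∀ u, G.dist v u ≤ d) (hj : j < d)
    (hsphere : #(distSphere G v (j + 1)) + k ≤ k * (k - 1) ^ j) :
    Fintype.card V + k ≤ mooreBound k d := by
  have hrest := sum_le_sum (s := (range d).erase j) fun i _ ↦ card_distSphere_succ_le v hdeg i
  rw [card_eq_one_add_sum_card_distSphere hconn hecc, mooreBound,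
    ← add_sum_erase _ _ (mem_range.2 hj), ← add_sum_erase _ _ (mem_range.2 hj)]
  lia

end Spheres

lemma exists_isCycle_length_le_of_egirth_le {V : Type*} {G : SimpleGraph V} {n : ℕ}
    (h : G.egirth ≤ n) : ∃ (v : V) (c : G.Walk v v), c.IsCycle ∧ c.length ≤ n := by
  have hcyclic : ¬ G.IsAcyclic := by
    rw [← SimpleGraph.egirth_eq_top]
    exact ne_top_of_le_ne_top (ENat.natCast_ne_top n) h
  obtain ⟨v, c, hc, hlen⟩ := SimpleGraph.exists_egirth_eq_length.2 hcyclic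
  exact ⟨v, c, hc, by exact_mod_cast hlen ▸ h⟩

theorem stmt_16_general {V : Type*} [Fintype V] {G : SimpleGraph V} [G.LocallyFinite] {k d : ℕ}
    (hconn : G.Connected) (hdeg : ∀ u, G.degree u ≤ k) {v : V} (hecc : ∀ u, G.dist v u ≤ d)
    {c : G.Walk v v} (hc : c.IsCycle) (hlen : c.length ≤ 2 * d - 2) :
    Fintype.card V + k ≤ mooreBound k d := by
  obtain ⟨i, ⟨hi, u, hu, htwo⟩ | ⟨hi, x, hx, y, hy, hxy⟩⟩ :=
    exists_one_lt_card_distParents_or_adj hc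
  · exact card_add_le_mooreBound hconn hdeg hecc (by lia)
      (card_distSphere_add_le_of_one_lt_card_distParents hdeg hu htwo)
  · exact card_add_le_mooreBound hconn hdeg hecc (by lia)
      (card_distSphere_add_le_of_adj hdeg hx hy hxy)

/-- A finite connected `k`-regular graph (`k ≥ 3`) of diameter at most `d ≥ 3` whose girth
`g` satisfies `3 ≤ g ≤ 2d − 2` has defect at least `k`: `|V(Γ)| ≤ M(k,d) − k`. -/
theorem stmt_16 (k d : ℕ) (hk : 3 ≤ k) (hd : 3 ≤ d)
    (V : Type*) [Fintype V] (G : SimpleGraph V) [DecidableRel G.Adj]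
    (hconn : G.Connected) (hreg : G.IsRegularOfDegree k)
    (hdiam : ∀ u v : V, G.dist u v ≤ d)
    (hg1 : (3 : ℕ∞) ≤ G.egirth) (hg2 : G.egirth ≤ ((2 * d - 2 : ℕ) : ℕ∞)) :
    (Fintype.card V : ℤ) ≤ (mooreBound k d : ℤ) - k := by
  obtain ⟨v, c, hc, hlen⟩ := exists_isCycle_length_le_of_egirth_le hg2
  have hcard := stmt_16_general hconn (fun u ↦ (hreg u).le) (hdiam v) hc hlen
  lia
end
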